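/- arXiv:2502.08935 — 2 statements merged into one kernel-verified Lean document; each statement's English description precedes it below -/
import Mathlib

section
/- Assume R is positive definite and Q − SᵀR⁻¹S is positive definite. Then for every T > 0 the matrix Riccati terminal value problem P′(t) + P(t)A + AᵀP(t) + CᵀP(t)C + Q − (BᵀP(t) + DᵀP(t)C + S)ᵀ(R + DᵀP(t)D)⁻¹(BᵀP(t) + DᵀP(t)C + S) = 0 for t ∈ [0,T], with P(T) = 0, admits a unique continuously differentiable solution P : [0,T] → (symmetric n×n real matrices) with P(t) positive semi-definite for all t ∈ [0,T]; moreover, denoting by δ > 0 the smallest eigenvalue of R, one has R + DᵀP(t)D ⪰ δI_m for all t ∈ [0,T]. -/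
open Matrix

/-- Entrywise derivative (within a set) of a matrix-valued function of time. -/
noncomputable def matDerivWithin {n : ℕ} (P : ℝ → Matrix (Fin n) (Fin n) ℝ)
    (s : Set ℝ) (t : ℝ) : Matrix (Fin n) (Fin n) ℝ :=
  Matrix.of fun i j => derivWithin (fun τ => P τ i j) s t

/-- `P` is a continuously differentiable, symmetric, positive semi-definite solution on
`[0, T]` of the Riccati terminal value problem
`P' + PA + AᵀP + CᵀPC + Q - (BᵀP + DᵀPC + S)ᵀ(R + DᵀPD)⁻¹(BᵀP + DᵀPC + S) = 0`,
`P(T) = 0`. -/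
def IsRiccatiPSol {n m : ℕ} (A C : Matrix (Fin n) (Fin n) ℝ)
    (B D : Matrix (Fin n) (Fin m) ℝ) (Q : Matrix (Fin n) (Fin n) ℝ)
    (S : Matrix (Fin m) (Fin n) ℝ) (R : Matrix (Fin m) (Fin m) ℝ)
    (T : ℝ) (P : ℝ → Matrix (Fin n) (Fin n) ℝ) : Prop :=
  (∀ i j, ContDiffOn ℝ 1 (fun t => P t i j) (Set.Icc 0 T)) ∧
  (∀ t ∈ Set.Icc (0:ℝ) T, (P t).IsSymm) ∧
  (∀ t ∈ Set.Icc (0:ℝ) T, (P t).PosSemidef) ∧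
  (∀ t ∈ Set.Icc (0:ℝ) T,
    matDerivWithin P (Set.Icc 0 T) t + P t * A + Aᵀ * P t + Cᵀ * P t * C + Q
      - (Bᵀ * P t + Dᵀ * P t * C + S)ᵀ * (R + Dᵀ * P t * D)⁻¹
          * (Bᵀ * P t + Dᵀ * P t * C + S) = 0) ∧
  P T = 0

/-!
Write the equation as `P' + F(P) = 0`. Completing the square twice at the optimal feedback gain
gives, for positive semi-definite `X`, matrices `M` and `W ≥ 0` with `F(X) = MᵀX + XM + W`. Hence
`X + hF(X) = (1 + hM)ᵀX(1 + hM) + hW - h²MᵀXM` stays within `O(h²)` of the positive semi-definite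
cone, and by Nagumo's invariance argument the flow of `F`, run backwards in time from `P(T) = 0`,
does not leave the cone. On the cone the quadratic term of `F` only decreases the trace, so
`tr F(X) ≤ κ tr X + q`; as `‖X‖ ≤ tr X` there, Grönwall's inequality bounds the solution a priori. One
can therefore multiply `F` by a cutoff equal to `1` on the relevant bounded part of the cone and
solve the resulting globally Lipschitz equation. Since multiplying by a factor in `[0, 1]`
preserves both tangency to the cone and the trace estimate, the solution never leaves the region
where the cutoff is `1`.
-/

open Set Filter Topology Metric Asymptotics
open scoped NNReal Manifold ContDiff

section VectorFields

variable {E F : Type*} [NormedAddCommGroup E] [NormedSpace ℝ E]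
  [NormedAddCommGroup F] [NormedSpace ℝ F]

lemma exists_cutoff_lipschitzWith_bounded [FiniteDimensional ℝ E] {K U : Set E}
    (hK : IsCompact K) (hU : IsOpen U) (hKU : K ⊆ U) {f : E → F} (hf : ContDiffOn ℝ 1 f U) :
    ∃ χ : E → ℝ, (∀ x, χ x ∈ Icc 0 1) ∧ (∀ x ∈ K, χ x = 1) ∧
      (∃ L, LipschitzWith L fun x => χ x • f x) ∧ ∃ M, ∀ x, ‖χ x • f x‖ ≤ M := by
  obtain ⟨V, hV, hKV, hVU⟩ := exists_compact_between hK hU hKU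
  obtain ⟨χ, hχK, hχV, hχ01⟩ :=
    exists_contMDiffMap_one_nhds_of_subset_interior 𝓘(ℝ, E) (n := 1) hK.isClosed hKV
  have hsupp : HasCompactSupport fun x => χ x • f x :=
    HasCompactSupport.intro hV fun x hx => by rw [hχV x hx, zero_smul]
  have hcont : ContDiff ℝ 1 fun x => χ x • f x := by
    refine contDiff_of_contDiffOn_union_of_isOpen (s := U) (t := Vᶜ)
      (χ.contMDiff.contDiff.contDiffOn.smul hf) ?_ ?_ hU hV.isClosed.isOpen_compl
    · exact contDiffOn_const.congr fun x hx => by rw [hχV x hx, zero_smul]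
    · exact eq_univ_of_univ_subset ((union_compl_self V).ge.trans (union_subset_union_left _ hVU))
  exact ⟨χ, hχ01, fun x hx => hχK.self_of_nhdsSet x hx,
    hcont.lipschitzWith_of_hasCompactSupport hsupp one_ne_zero,
    hsupp.exists_bound_of_continuous hcont.continuous⟩

lemma exists_hasDerivWithinAt_Icc [CompleteSpace E] {G : E → E} {L : ℝ≥0}
    (hG : LipschitzWith L G) {M : ℝ} (hM : ∀ x, ‖G x‖ ≤ M) {a b : ℝ} (hab : a ≤ b) (x₀ : E) :
    ∃ X : ℝ → E, X a = x₀ ∧ ∀ t ∈ Icc a b, HasDerivWithinAt X (G (X t)) (Icc a b) t := by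
  lift M to ℝ≥0 using (norm_nonneg _).trans (hM x₀)
  have hPL : IsPicardLindelof (fun _ => G) (⟨a, left_mem_Icc.2 hab⟩ : Icc a b) x₀
      (M * (b - a).toNNReal) 0 M L :=
    { lipschitzOnWith := fun _ _ => hG.lipschitzOnWith
      continuousOn := fun _ _ => continuousOn_const
      norm_le := fun _ _ x _ => hM x
      mul_max_le := by simp [hab] }
  exact hPL.exists_eq_forall_mem_Icc_hasDerivWithinAt₀

lemma eventually_slope_infDist_lt [ProperSpace E] {K : Set E} (hK : IsClosed K)
    (hKne : K.Nonempty) {G : E → E} {L : ℝ≥0} (hG : LipschitzWith L G)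
    (hGK : ∀ x ∈ K, (fun h : ℝ => infDist (x + h • G x) K) =o[𝓝[>] 0] fun h => h)
    {X : ℝ → E} {t r : ℝ} (hX : HasDerivWithinAt X (G (X t)) (Ici t) t)
    (hr : L * infDist (X t) K < r) :
    ∀ᶠ s in 𝓝[>] t, (s - t)⁻¹ * (infDist (X s) K - infDist (X t) K) < r := by
  obtain ⟨p, hpK, hp⟩ := hK.exists_infDist_eq_dist hKne (X t)
  obtain ⟨ε, hε, hεr⟩ : ∃ ε > 0, 2 * ε < r - L * infDist (X t) K :=
    ⟨(r - L * infDist (X t) K) / 3, by linarith, by linarith⟩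
  have hshift : Tendsto (fun s => s - t) (𝓝[>] t) (𝓝[>] 0) :=
    tendsto_nhdsWithin_iff.2 ⟨((continuous_sub_right t).tendsto' t 0 (sub_self t)).mono_left
      nhdsWithin_le_nhds, eventually_mem_nhdsWithin.mono fun _ hs => sub_pos.2 (mem_Ioi.1 hs)⟩
  have htangent := hshift.eventually ((hGK p hpK).def hε)
  have hderiv := ((hasDerivWithinAt_iff_isLittleO.1 hX).def hε).filter_mono
    (nhdsWithin_mono t Ioi_subset_Ici_self)
  filter_upwards [htangent, hderiv, self_mem_nhdsWithin] with s hs₁ hs₂ hts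
  have hh : 0 < s - t := sub_pos.2 hts
  rw [Real.norm_of_nonneg hh.le] at hs₁ hs₂
  rw [Real.norm_of_nonneg infDist_nonneg] at hs₁
  -- Compare `X s` with the Euler step issuing from the point `p` of `K` nearest to `X t`.
  have hdist : dist (X s) (p + (s - t) • G p) ≤
      ε * (s - t) + infDist (X t) K + (s - t) * (L * infDist (X t) K) := by
    have hG' : ‖G (X t) - G p‖ ≤ L * infDist (X t) K := by
      simpa only [hp, dist_eq_norm] using hG.dist_le_mul (X t) p
    calc dist (X s) (p + (s - t) • G p)
        = ‖(X s - X t - (s - t) • G (X t)) + (X t - p) + (s - t) • (G (X t) - G p)‖ := by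
          rw [dist_eq_norm]
          congr 1
          module
      _ ≤ ‖X s - X t - (s - t) • G (X t)‖ + ‖X t - p‖ + ‖(s - t) • (G (X t) - G p)‖ :=
          norm_add₃_le
      _ ≤ ε * (s - t) + infDist (X t) K + (s - t) * (L * infDist (X t) K) := by
          rw [norm_smul, Real.norm_of_nonneg hh.le, ← dist_eq_norm (X t) p, ← hp]
          gcongr
  rw [inv_mul_lt_iff₀ hh]
  linarith [infDist_le_infDist_add_dist (s := K) (x := X s) (y := p + (s - t) • G p),
    mul_lt_mul_of_pos_left hεr hh]

theorem mem_of_hasDerivWithinAt_of_infDist_isLittleO [ProperSpace E] {K : Set E} (hK : IsClosed K)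
    {G : E → E} {L : ℝ≥0} (hG : LipschitzWith L G)
    (hGK : ∀ x ∈ K, (fun h : ℝ => infDist (x + h • G x) K) =o[𝓝[>] 0] fun h => h)
    {X : ℝ → E} {a b : ℝ} (hX : ∀ t ∈ Icc a b, HasDerivWithinAt X (G (X t)) (Icc a b) t)
    (ha : X a ∈ K) {t : ℝ} (ht : t ∈ Icc a b) : X t ∈ K := by
  have hcont : ContinuousOn X (Icc a b) := fun s hs => (hX s hs).continuousWithinAt
  have hle := le_gronwallBound_of_liminf_deriv_right_le (δ := 0) (K := L) (ε := 0)
    ((continuous_infDist_pt K).comp_continuousOn hcont)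
    (fun s hs r hr => (eventually_slope_infDist_lt hK ⟨_, ha⟩ hG hGK
      ((hX s (Ico_subset_Icc_self hs)).mono_of_mem_nhdsWithin
        (Icc_mem_nhdsGE_of_mem hs)) hr).frequently)
    (infDist_zero_of_mem ha).le (fun s _ => (add_zero _).ge) t ht
  rw [gronwallBound_ε0_δ0] at hle
  exact (hK.mem_iff_infDist_zero ⟨_, ha⟩).2 (hle.antisymm infDist_nonneg)

lemma le_gronwallBound_of_hasDerivWithinAt_Icc {f f' : ℝ → ℝ} {δ K ε a b : ℝ}
    (hf : ∀ t ∈ Icc a b, HasDerivWithinAt f (f' t) (Icc a b) t) (ha : f a ≤ δ)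
    (bound : ∀ t ∈ Ico a b, f' t ≤ K * f t + ε) {t : ℝ} (ht : t ∈ Icc a b) :
    f t ≤ gronwallBound δ K ε (t - a) :=
  le_gronwallBound_of_liminf_deriv_right_le (fun s hs => (hf s hs).continuousWithinAt)
    (fun s hs _ hr => ((hf s (Ico_subset_Icc_self hs)).mono_of_mem_nhdsWithin
      (Icc_mem_nhdsGE_of_mem hs)).liminf_right_slope_le hr) ha bound t ht

theorem eqOn_Icc_of_hasDerivWithinAt_of_convex [ProperSpace E] {K : Set E} (hK : IsClosed K)
    (hKconv : Convex ℝ K) {G : E → E} (hG : ContDiffOn ℝ 1 G K) {X Y : ℝ → E} {a b : ℝ}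
    (hX : ∀ t ∈ Icc a b, X t ∈ K ∧ HasDerivWithinAt X (G (X t)) (Icc a b) t)
    (hY : ∀ t ∈ Icc a b, Y t ∈ K ∧ HasDerivWithinAt Y (G (Y t)) (Icc a b) t)
    (hb : X b = Y b) : EqOn X Y (Icc a b) := by
  have hXc : ContinuousOn X (Icc a b) := fun t ht => (hX t ht).2.continuousWithinAt
  have hYc : ContinuousOn Y (Icc a b) := fun t ht => (hY t ht).2.continuousWithinAt
  obtain ⟨r, hr⟩ := isCompact_Icc.exists_bound_of_continuousOn hXc
  obtain ⟨ρ, hρ⟩ := isCompact_Icc.exists_bound_of_continuousOn hYc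
  obtain ⟨L, hL⟩ := (hG.mono inter_subset_left).exists_lipschitzOnWith one_ne_zero
    (hKconv.inter (convex_closedBall 0 (max r ρ))) ((isCompact_closedBall 0 _).inter_left hK)
  have hIic (t : ℝ) (ht : t ∈ Ioc a b) : Icc a b ∈ 𝓝[≤] t := Icc_mem_nhdsLE_of_mem ht
  have hIoc {t : ℝ} (ht : t ∈ Ioc a b) : t ∈ Icc a b := Ioc_subset_Icc_self ht
  exact ODE_solution_unique_of_mem_Icc_left (v := fun _ => G)
    (s := fun _ => K ∩ closedBall 0 (max r ρ)) (fun _ _ => hL)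
    hXc (fun t ht => (hX t (hIoc ht)).2.mono_of_mem_nhdsWithin (hIic t ht))
    (fun t ht => ⟨(hX t (hIoc ht)).1,
      mem_closedBall_zero_iff.2 ((hr t (hIoc ht)).trans (le_max_left r ρ))⟩)
    hYc (fun t ht => (hY t (hIoc ht)).2.mono_of_mem_nhdsWithin (hIic t ht))
    (fun t ht => ⟨(hY t (hIoc ht)).1,
      mem_closedBall_zero_iff.2 ((hρ t (hIoc ht)).trans (le_max_right r ρ))⟩) hb

lemma contDiffOn_one_of_hasDerivWithinAt {s : Set ℝ} (hs : UniqueDiffOn ℝ s) {f f' : ℝ → F}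
    (hf : ∀ t ∈ s, HasDerivWithinAt f (f' t) s t) (hf' : ContinuousOn f' s) :
    ContDiffOn ℝ 1 f s :=
  (contDiffOn_one_iff_derivWithin hs).2 ⟨fun t ht => (hf t ht).differentiableWithinAt,
    hf'.congr fun t ht => (hf t ht).derivWithin (hs t ht)⟩

lemma hasDerivWithinAt_comp_const_sub {f : ℝ → F} {f' : F} {s : Set ℝ} {c t : ℝ}
    (hf : HasDerivWithinAt f f' s (c - t)) :
    HasDerivWithinAt (fun x => f (c - x)) (-f') ((fun x => c - x) ⁻¹' s) t := by
  have hcomp := hf.scomp t ((hasDerivWithinAt_id t _).const_sub c) (mapsTo_preimage _ s)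
  rwa [neg_one_smul] at hcomp

end VectorFields

section Matrices

open scoped Matrix.Norms.Elementwise

variable {l m n : Type*}

lemma isClosed_setOf_posSemidef [Finite n] : IsClosed {X : Matrix n n ℝ | X.PosSemidef} := by
  cases nonempty_fintype n
  simp only [posSemidef_iff_dotProduct_mulVec, IsHermitian, Set.ofPred_and, Set.ofPred_forall]
  exact (isClosed_eq (by fun_prop) continuous_id).inter
    (isClosed_iInter fun v => isClosed_le continuous_const (by fun_prop))

lemma convex_setOf_posSemidef : Convex ℝ {X : Matrix n n ℝ | X.PosSemidef} :=
  fun _ hX _ hY _ _ ha hb _ => (hX.smul ha).add (hY.smul hb)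

section Eigenvalues

variable [Fintype n] [DecidableEq n]

lemma iInf_eigenvalues_pos [Nonempty n] {R : Matrix n n ℝ} (hR : R.PosDef) :
    0 < ⨅ i, hR.1.eigenvalues i := by
  obtain ⟨i, hi⟩ := exists_eq_ciInf_of_finite (f := hR.1.eigenvalues)
  exact hi ▸ hR.eigenvalues_pos i

open scoped MatrixOrder in
lemma posSemidef_sub_iInf_eigenvalues_smul_one {R : Matrix n n ℝ} (hR : R.IsHermitian) :
    (R - (⨅ i, hR.eigenvalues i) • (1 : Matrix n n ℝ)).PosSemidef := by
  rw [← le_iff, ← Algebra.algebraMap_eq_smul_one,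
    algebraMap_le_iff_le_spectrum (a := R) (ha := hR.isSelfAdjoint),
    hR.spectrum_real_eq_range_eigenvalues]
  rintro _ ⟨i, rfl⟩
  exact ciInf_le (finite_range _).bddBelow i

end Eigenvalues

lemma posSemidef_transpose_mul_mul_same [Fintype m] [Finite n] {X : Matrix m m ℝ}
    (hX : X.PosSemidef) (M : Matrix m n ℝ) : (Mᵀ * X * M).PosSemidef :=
  conjTranspose_eq_transpose_of_trivial M ▸ hX.conjTranspose_mul_mul_same M

lemma posDef_add_transpose_mul_mul [Fintype m] [Finite n] {R : Matrix n n ℝ}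
    {X : Matrix m m ℝ} (hR : R.PosDef) (hX : X.PosSemidef) (D : Matrix m n ℝ) :
    (R + Dᵀ * X * D).PosDef :=
  hR.add_posSemidef (posSemidef_transpose_mul_mul_same hX D)

lemma completeSquare_transpose_mul_mul [Fintype m] [DecidableEq m] {R : Matrix m m ℝ}
    (hR : R.IsSymm) (hRu : IsUnit R.det) (K S : Matrix m n ℝ) :
    Kᵀ * S + Sᵀ * K + Kᵀ * R * K =
      (K + R⁻¹ * S)ᵀ * R * (K + R⁻¹ * S) - Sᵀ * R⁻¹ * S := by
  simp only [transpose_add, transpose_mul, transpose_nonsing_inv, hR.eq, Matrix.mul_assoc,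
    Matrix.mul_add, Matrix.add_mul, nonsing_inv_mul_cancel_left _ _ hRu,
    mul_nonsing_inv_cancel_left _ _ hRu]
  abel

variable [Fintype n]

lemma norm_le_trace_of_posSemidef {X : Matrix n n ℝ} (hX : X.PosSemidef) : ‖X‖ ≤ X.trace := by
  classical
  have hdiag_le (i : n) : X i i ≤ X.trace :=
    Finset.single_le_sum (f := fun i => X i i) (fun i _ => hX.diag_nonneg) (Finset.mem_univ i)
  refine (norm_le_iff hX.trace_nonneg).2 fun i j => ?_
  have hsymm : X j i = X i j := hX.1.apply i j
  have hquad (a : ℝ) : 0 ≤ X i i + 2 * a * X i j + a * a * X j j := by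
    have hnonneg := hX.dotProduct_mulVec_nonneg (Pi.single i 1 + Pi.single j a)
    simp only [star_trivial, mulVec_add, mulVec_single, MulOpposite.op_one, one_smul,
      op_smul_eq_smul, dotProduct_add, add_dotProduct, single_dotProduct, col_apply, one_mul,
      hsymm, dotProduct_smul, smul_eq_mul] at hnonneg
    linarith
  rw [Real.norm_eq_abs, abs_le]
  constructor <;> linarith [hquad 1, hquad (-1), hdiag_le i, hdiag_le j]

lemma exists_trace_mul_le (W : Matrix n n ℝ) :
    ∃ κ, 0 ≤ κ ∧ ∀ X : Matrix n n ℝ, X.PosSemidef → (X * W).trace ≤ κ * X.trace := by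
  refine ⟨∑ i, ∑ j, |W j i|, by positivity, fun X hX => ?_⟩
  have hentry (i j : n) : X i j * W j i ≤ |W j i| * X.trace :=
    calc X i j * W j i ≤ |W j i| * |X i j| := by
          rw [mul_comm, ← abs_mul]
          exact le_abs_self _
      _ ≤ |W j i| * X.trace := by
          gcongr
          exact (norm_entry_le_entrywise_sup_norm X).trans (norm_le_trace_of_posSemidef hX)
  calc (X * W).trace = ∑ i, ∑ j, X i j * W j i := by simp only [trace, diag_apply, mul_apply]
    _ ≤ ∑ i, ∑ j, |W j i| * X.trace :=
        Finset.sum_le_sum fun i _ => Finset.sum_le_sum fun j _ => hentry i j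
    _ = (∑ i, ∑ j, |W j i|) * X.trace := by simp only [Finset.sum_mul]

lemma infDist_setOf_posSemidef_le {X W : Matrix n n ℝ} (hX : X.PosSemidef)
    (hW : W.PosSemidef) (M : Matrix n n ℝ) {h : ℝ} (hh : 0 ≤ h) :
    infDist (X + h • (Mᵀ * X + X * M + W)) {Y | Y.PosSemidef} ≤ h ^ 2 * ‖Mᵀ * X * M‖ := by
  classical
  have hmem : ((1 + h • M)ᵀ * X * (1 + h • M) + h • W).PosSemidef :=
    (posSemidef_transpose_mul_mul_same hX _).add (hW.smul hh)
  have hsq : X + h • (Mᵀ * X + X * M + W) - ((1 + h • M)ᵀ * X * (1 + h • M) + h • W) =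
      -(h ^ 2 • (Mᵀ * X * M)) := by
    simp only [transpose_add, transpose_one, transpose_smul, Matrix.add_mul, Matrix.mul_add,
      Matrix.one_mul, Matrix.mul_one, Matrix.smul_mul, Matrix.mul_smul]
    module
  calc infDist (X + h • (Mᵀ * X + X * M + W)) {Y | Y.PosSemidef}
      ≤ dist (X + h • (Mᵀ * X + X * M + W)) ((1 + h • M)ᵀ * X * (1 + h • M) + h • W) :=
        infDist_le_dist_of_mem hmem
    _ = h ^ 2 * ‖Mᵀ * X * M‖ := by
        rw [dist_eq_norm, hsq, norm_neg, norm_smul, Real.norm_of_nonneg (sq_nonneg h)]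

variable {E : Type*} [NormedAddCommGroup E] [NormedSpace ℝ E] {s : Set E} {k : WithTop ℕ∞}

lemma contDiffOn_matrix_iff [Fintype m] {f : E → Matrix m n ℝ} :
    ContDiffOn ℝ k f s ↔ ∀ i j, ContDiffOn ℝ k (fun x => f x i j) s :=
  contDiffOn_pi.trans (forall_congr' fun _ => contDiffOn_pi)

lemma contDiffOn_matrix_mul [Fintype l] [Fintype m] {f : E → Matrix l m ℝ} {g : E → Matrix m n ℝ}
    (hf : ContDiffOn ℝ k f s) (hg : ContDiffOn ℝ k g s) :
    ContDiffOn ℝ k (fun x => f x * g x) s := by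
  rw [contDiffOn_matrix_iff] at hf hg ⊢
  simp only [mul_apply]
  exact fun i j => ContDiffOn.sum fun c _ => (hf i c).mul (hg c j)

lemma contDiffOn_matrix_transpose [Fintype m] {f : E → Matrix m n ℝ} (hf : ContDiffOn ℝ k f s) :
    ContDiffOn ℝ k (fun x => (f x)ᵀ) s :=
  contDiffOn_matrix_iff.2 fun i j => contDiffOn_matrix_iff.1 hf j i

variable [DecidableEq n]

lemma contDiffOn_matrix_det {f : E → Matrix n n ℝ} (hf : ContDiffOn ℝ k f s) :
    ContDiffOn ℝ k (fun x => (f x).det) s := by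
  simp only [det_apply]
  exact ContDiffOn.sum fun σ _ =>
    (contDiffOn_prod fun i _ => contDiffOn_matrix_iff.1 hf (σ i) i).const_smul _

lemma contDiffOn_matrix_adjugate {f : E → Matrix n n ℝ} (hf : ContDiffOn ℝ k f s) :
    ContDiffOn ℝ k (fun x => (f x).adjugate) s := by
  refine contDiffOn_matrix_iff.2 fun i j => ?_
  simp only [adjugate_apply]
  refine contDiffOn_matrix_det (contDiffOn_matrix_iff.2 fun i' j' => ?_)
  simp only [updateRow_apply]
  split_ifs
  · exact contDiffOn_const
  · exact contDiffOn_matrix_iff.1 hf i' j'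

lemma contDiffOn_matrix_inv {f : E → Matrix n n ℝ} (hf : ContDiffOn ℝ k f s)
    (hdet : ∀ x ∈ s, (f x).det ≠ 0) : ContDiffOn ℝ k (fun x => (f x)⁻¹) s := by
  simp only [inv_def, Ring.inverse_eq_inv']
  exact ((contDiffOn_matrix_det hf).inv hdet).smul (contDiffOn_matrix_adjugate hf)

end Matrices

section Riccati

open scoped Matrix.Norms.Elementwise

variable {n m : Type*} [Fintype n] [Fintype m] [DecidableEq m]

/-- The nonlinear map `F` for which the matrix Riccati equation reads `P' + F(P) = 0`. -/
noncomputable def riccatiMap (A C : Matrix n n ℝ) (B D : Matrix n m ℝ) (Q : Matrix n n ℝ)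
    (S : Matrix m n ℝ) (R : Matrix m m ℝ) (X : Matrix n n ℝ) : Matrix n n ℝ :=
  X * A + Aᵀ * X + Cᵀ * X * C + Q
    - (Bᵀ * X + Dᵀ * X * C + S)ᵀ * (R + Dᵀ * X * D)⁻¹ * (Bᵀ * X + Dᵀ * X * C + S)

/-- The optimal feedback gain of the linear-quadratic control problem behind the Riccati
equation: the matrix `K` minimising the quadratic expression in `riccatiMap_eq_feedback`. -/
noncomputable def riccatiGain (C : Matrix n n ℝ) (B D : Matrix n m ℝ) (S : Matrix m n ℝ)
    (R : Matrix m m ℝ) (X : Matrix n n ℝ) : Matrix m n ℝ :=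
  -((R + Dᵀ * X * D)⁻¹ * (Bᵀ * X + Dᵀ * X * C + S))

variable {A C : Matrix n n ℝ} {B D : Matrix n m ℝ} {Q : Matrix n n ℝ} {S : Matrix m n ℝ}
  {R : Matrix m m ℝ} {X : Matrix n n ℝ}

lemma riccatiMap_eq_feedback (hX : X.IsSymm) (hZ : IsUnit (R + Dᵀ * X * D).det) {K : Matrix m n ℝ}
    (hK : K = riccatiGain C B D S R X) :
    riccatiMap A C B D Q S R X =
      (A + B * K)ᵀ * X + X * (A + B * K) + (C + D * K)ᵀ * X * (C + D * K)
        + Q + (Kᵀ * S + Sᵀ * K + Kᵀ * R * K) := by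
  have hZK : (R + Dᵀ * X * D) * K = -(Bᵀ * X + Dᵀ * X * C + S) := by
    rw [hK, riccatiGain, Matrix.mul_neg, mul_nonsing_inv_cancel_left _ _ hZ]
  have hgain : riccatiMap A C B D Q S R X = X * A + Aᵀ * X + Cᵀ * X * C + Q
      + (Bᵀ * X + Dᵀ * X * C + S)ᵀ * K
      + Kᵀ * ((Bᵀ * X + Dᵀ * X * C + S) + (R + Dᵀ * X * D) * K) := by
    rw [hZK, add_neg_cancel, Matrix.mul_zero, add_zero, hK, riccatiGain, Matrix.mul_neg,
      ← Matrix.mul_assoc, ← sub_eq_add_neg, riccatiMap]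
  rw [hgain]
  simp only [transpose_add, transpose_mul, transpose_transpose, hX.eq, Matrix.mul_assoc,
    Matrix.mul_add, Matrix.add_mul]
  abel

lemma exists_posSemidef_riccatiMap_eq (hR : R.PosDef) (hQS : (Q - Sᵀ * R⁻¹ * S).PosSemidef)
    (hX : X.PosSemidef) : ∃ M W : Matrix n n ℝ,
      W.PosSemidef ∧ riccatiMap A C B D Q S R X = Mᵀ * X + X * M + W := by
  have hZ : IsUnit (R + Dᵀ * X * D).det :=
    (isUnit_iff_isUnit_det _).1 (posDef_add_transpose_mul_mul hR hX D).isUnit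
  set K := riccatiGain C B D S R X with hK
  refine ⟨A + B * K, (C + D * K)ᵀ * X * (C + D * K) + ((Q - Sᵀ * R⁻¹ * S) +
    (K + R⁻¹ * S)ᵀ * R * (K + R⁻¹ * S)), ?_, ?_⟩
  · exact (posSemidef_transpose_mul_mul_same hX _).add
      (hQS.add (posSemidef_transpose_mul_mul_same hR.posSemidef _))
  · rw [riccatiMap_eq_feedback (isHermitian_iff_isSymm.1 hX.isHermitian) hZ hK,
      completeSquare_transpose_mul_mul (isHermitian_iff_isSymm.1 hR.isHermitian)
        ((isUnit_iff_isUnit_det _).1 hR.isUnit)]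
    abel

lemma infDist_add_smul_riccatiMap_isLittleO (hR : R.PosDef)
    (hQS : (Q - Sᵀ * R⁻¹ * S).PosSemidef) (hX : X.PosSemidef) {c : ℝ} (hc : 0 ≤ c) :
    (fun h : ℝ => infDist (X + h • c • riccatiMap A C B D Q S R X) {Y | Y.PosSemidef})
      =o[𝓝[>] 0] fun h => h := by
  obtain ⟨M, W, hW, hMW⟩ := exists_posSemidef_riccatiMap_eq (A := A) (B := B) (C := C) (D := D)
    hR hQS hX
  have hsq : (fun h : ℝ => h ^ 2) =o[𝓝[>] 0] fun h => h :=
    (isLittleO_pow_id one_lt_two).mono nhdsWithin_le_nhds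
  refine IsBigO.trans_isLittleO (.of_bound (c ^ 2 * ‖Mᵀ * X * M‖) ?_) hsq
  filter_upwards [self_mem_nhdsWithin] with h hh
  rw [Real.norm_of_nonneg infDist_nonneg, Real.norm_of_nonneg (sq_nonneg h), smul_smul, hMW]
  calc _ ≤ (h * c) ^ 2 * ‖Mᵀ * X * M‖ :=
        infDist_setOf_posSemidef_le hX hW M (mul_nonneg (mem_Ioi.1 hh).le hc)
    _ = c ^ 2 * ‖Mᵀ * X * M‖ * h ^ 2 := by ring

lemma exists_trace_riccatiMap_le (A C : Matrix n n ℝ) (B D : Matrix n m ℝ) (Q : Matrix n n ℝ)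
    (S : Matrix m n ℝ) (hR : R.PosDef) : ∃ κ q : ℝ, 0 ≤ κ ∧ 0 ≤ q ∧
      ∀ X : Matrix n n ℝ, X.PosSemidef →
        (riccatiMap A C B D Q S R X).trace ≤ κ * X.trace + q := by
  obtain ⟨κ, hκ, hκX⟩ := exists_trace_mul_le (A + Aᵀ + C * Cᵀ)
  refine ⟨κ, |Q.trace|, hκ, abs_nonneg _, fun X hX => ?_⟩
  have hcost := (posSemidef_transpose_mul_mul_same
    (posDef_add_transpose_mul_mul hR hX D).inv.posSemidef
    (Bᵀ * X + Dᵀ * X * C + S)).trace_nonneg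
  have hlin : (X * A + Aᵀ * X + Cᵀ * X * C).trace = (X * (A + Aᵀ + C * Cᵀ)).trace := by
    rw [Matrix.mul_add, Matrix.mul_add, trace_add, trace_add, trace_add, trace_add,
      trace_mul_comm Aᵀ, Matrix.mul_assoc Cᵀ, trace_mul_comm Cᵀ, Matrix.mul_assoc X]
  rw [riccatiMap, trace_sub, trace_add, hlin]
  linarith [hκX X hX, le_abs_self Q.trace]

lemma contDiffOn_riccatiMap {k : WithTop ℕ∞} :
    ContDiffOn ℝ k (riccatiMap A C B D Q S R) {X | (R + Dᵀ * X * D).det ≠ 0} := by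
  set U := {X : Matrix n n ℝ | (R + Dᵀ * X * D).det ≠ 0}
  have hX : ContDiffOn ℝ k (fun X : Matrix n n ℝ => X) U := contDiffOn_id
  have hDX : ContDiffOn ℝ k (fun X => Dᵀ * X) U := contDiffOn_matrix_mul contDiffOn_const hX
  have hCXC : ContDiffOn ℝ k (fun X => Cᵀ * X * C) U :=
    contDiffOn_matrix_mul (contDiffOn_matrix_mul contDiffOn_const hX) contDiffOn_const
  have hY : ContDiffOn ℝ k (fun X => Bᵀ * X + Dᵀ * X * C + S) U :=
    ((contDiffOn_matrix_mul contDiffOn_const hX).add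
      (contDiffOn_matrix_mul hDX contDiffOn_const)).add contDiffOn_const
  have hZ : ContDiffOn ℝ k (fun X => (R + Dᵀ * X * D)⁻¹) U :=
    contDiffOn_matrix_inv (contDiffOn_const.add (contDiffOn_matrix_mul hDX contDiffOn_const))
      fun _ h => h
  exact ((((contDiffOn_matrix_mul hX contDiffOn_const).add
    (contDiffOn_matrix_mul contDiffOn_const hX)).add hCXC).add contDiffOn_const).sub
    (contDiffOn_matrix_mul (contDiffOn_matrix_mul (contDiffOn_matrix_transpose hY) hZ) hY)

lemma isOpen_setOf_det_ne_zero : IsOpen {X : Matrix n n ℝ | (R + Dᵀ * X * D).det ≠ 0} :=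
  isOpen_ne_fun (by fun_prop) continuous_const

lemma setOf_posSemidef_subset_det_ne_zero (hR : R.PosDef) (D : Matrix n m ℝ) :
    {X : Matrix n n ℝ | X.PosSemidef} ⊆ {X | (R + Dᵀ * X * D).det ≠ 0} :=
  fun _ hX => (posDef_add_transpose_mul_mul hR hX D).det_pos.ne'

lemma contDiffOn_riccatiMap_posSemidef {k : WithTop ℕ∞} (hR : R.PosDef) :
    ContDiffOn ℝ k (riccatiMap A C B D Q S R) {X | X.PosSemidef} :=
  contDiffOn_riccatiMap.mono (setOf_posSemidef_subset_det_ne_zero hR D)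

section CutOff

variable {χ : Matrix n n ℝ → ℝ} {P : ℝ → Matrix n n ℝ} {a b : ℝ}

lemma posSemidef_of_hasDerivWithinAt_smul_riccatiMap (hR : R.PosDef)
    (hQS : (Q - Sᵀ * R⁻¹ * S).PosSemidef) (hχ : ∀ X, 0 ≤ χ X) {L : ℝ≥0}
    (hL : LipschitzWith L fun X => χ X • riccatiMap A C B D Q S R X)
    (hP : ∀ t ∈ Icc a b,
      HasDerivWithinAt P (χ (P t) • riccatiMap A C B D Q S R (P t)) (Icc a b) t)
    (ha : (P a).PosSemidef) : ∀ t ∈ Icc a b, (P t).PosSemidef :=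
  fun _ ht => mem_of_hasDerivWithinAt_of_infDist_isLittleO (E := Matrix n n ℝ)
    (K := {X : Matrix n n ℝ | X.PosSemidef}) isClosed_setOf_posSemidef hL
    (fun X (hX : X.PosSemidef) => infDist_add_smul_riccatiMap_isLittleO hR hQS hX (hχ X)) hP ha ht

lemma trace_le_gronwallBound_of_hasDerivWithinAt_smul (hχ : ∀ X, χ X ∈ Icc 0 1)
    {F : Matrix n n ℝ → Matrix n n ℝ} {κ q : ℝ} (hκ : 0 ≤ κ) (hq : 0 ≤ q)
    (hF : ∀ X : Matrix n n ℝ, X.PosSemidef → (F X).trace ≤ κ * X.trace + q)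
    (hP : ∀ t ∈ Icc a b, HasDerivWithinAt P (χ (P t) • F (P t)) (Icc a b) t)
    (hpsd : ∀ t ∈ Icc a b, (P t).PosSemidef) :
    ∀ t ∈ Icc a b, (P t).trace ≤ gronwallBound (P a).trace κ q (b - a) := by
  intro t ht
  have htrace (s : ℝ) (hs : s ∈ Icc a b) :
      HasDerivWithinAt (fun s => (P s).trace) (χ (P s) • F (P s)).trace (Icc a b) s :=
    HasDerivWithinAt.fun_sum fun i _ =>
      hasDerivWithinAt_pi.1 (hasDerivWithinAt_pi.1 (hP s hs) i) i
  have hbound (s : ℝ) (hs : s ∈ Ico a b) :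
      (χ (P s) • F (P s)).trace ≤ κ * (P s).trace + q := by
    have hs' := hpsd s (Ico_subset_Icc_self hs)
    obtain ⟨h0, h1⟩ := hχ (P s)
    have hrhs : 0 ≤ κ * (P s).trace + q := add_nonneg (mul_nonneg hκ hs'.trace_nonneg) hq
    calc (χ (P s) • F (P s)).trace = χ (P s) * (F (P s)).trace := trace_smul _ _
      _ ≤ χ (P s) * (κ * (P s).trace + q) := by gcongr; exact hF _ hs'
      _ ≤ κ * (P s).trace + q := mul_le_of_le_one_left hrhs h1
  have ha : (P a).PosSemidef := hpsd a (left_mem_Icc.2 (ht.1.trans ht.2))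
  exact (le_gronwallBound_of_hasDerivWithinAt_Icc htrace le_rfl hbound ht).trans
    (gronwallBound_mono ha.trace_nonneg hq hκ (sub_le_sub_right ht.2 a))

end CutOff

theorem exists_posSemidef_hasDerivWithinAt_riccatiMap (A C : Matrix n n ℝ) (B D : Matrix n m ℝ)
    (hR : R.PosDef) (hQS : (Q - Sᵀ * R⁻¹ * S).PosSemidef) (hX : X.PosSemidef) {a b : ℝ}
    (hab : a ≤ b) : ∃ P : ℝ → Matrix n n ℝ, P a = X ∧ ∀ t ∈ Icc a b,
      (P t).PosSemidef ∧ HasDerivWithinAt P (riccatiMap A C B D Q S R (P t)) (Icc a b) t := by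
  obtain ⟨κ, q, hκ, hq, htrace⟩ := exists_trace_riccatiMap_le A C B D Q S hR
  set K := {Y : Matrix n n ℝ | Y.PosSemidef} ∩
    closedBall 0 (gronwallBound X.trace κ q (b - a))
  have hK : IsCompact K := (isCompact_closedBall 0 _).inter_left isClosed_setOf_posSemidef
  obtain ⟨χ, hχ, hχK, ⟨L, hL⟩, M, hM⟩ := exists_cutoff_lipschitzWith_bounded hK
    isOpen_setOf_det_ne_zero
    (inter_subset_left.trans (setOf_posSemidef_subset_det_ne_zero hR D))
    (contDiffOn_riccatiMap (A := A) (C := C) (B := B) (Q := Q) (S := S))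
  obtain ⟨P, rfl, hP⟩ := exists_hasDerivWithinAt_Icc hL hM hab X
  have hpsd := posSemidef_of_hasDerivWithinAt_smul_riccatiMap hR hQS (fun Y => (hχ Y).1) hL hP hX
  have hbound := trace_le_gronwallBound_of_hasDerivWithinAt_smul hχ hκ hq htrace hP hpsd
  refine ⟨P, rfl, fun t ht => ⟨hpsd t ht, ?_⟩⟩
  have hmem : P t ∈ K := ⟨hpsd t ht, mem_closedBall_zero_iff.2
    ((norm_le_trace_of_posSemidef (hpsd t ht)).trans (hbound t ht))⟩
  have hderiv := hP t ht
  rw [hχK _ hmem, one_smul] at hderiv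
  exact hderiv

end Riccati

section TerminalValueProblem

open scoped Matrix.Norms.Elementwise

variable {n m : ℕ} {A C Q : Matrix (Fin n) (Fin n) ℝ} {B D : Matrix (Fin n) (Fin m) ℝ}
  {S : Matrix (Fin m) (Fin n) ℝ} {R : Matrix (Fin m) (Fin m) ℝ} {T : ℝ}
  {P P₁ P₂ : ℝ → Matrix (Fin n) (Fin n) ℝ}

lemma isRiccatiPSol_iff_hasDerivWithinAt (hR : R.PosDef) (hT : 0 < T) :
    IsRiccatiPSol A C B D Q S R T P ↔
      (∀ t ∈ Icc 0 T, (P t).PosSemidef ∧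
        HasDerivWithinAt P (-riccatiMap A C B D Q S R (P t)) (Icc 0 T) t) ∧ P T = 0 := by
  have heq (t : ℝ) : matDerivWithin P (Icc 0 T) t + P t * A + Aᵀ * P t + Cᵀ * P t * C + Q
        - (Bᵀ * P t + Dᵀ * P t * C + S)ᵀ * (R + Dᵀ * P t * D)⁻¹
          * (Bᵀ * P t + Dᵀ * P t * C + S) = 0 ↔
      matDerivWithin P (Icc 0 T) t = -riccatiMap A C B D Q S R (P t) := by
    rw [eq_neg_iff_add_eq_zero, riccatiMap]
    simp only [add_assoc, add_sub_assoc]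
  constructor
  · rintro ⟨hC1, -, hpsd, hode, hPT⟩
    refine ⟨fun t ht => ⟨hpsd t ht, ?_⟩, hPT⟩
    rw [← (heq t).1 (hode t ht)]
    exact hasDerivWithinAt_pi.2 fun i => hasDerivWithinAt_pi.2 fun j =>
      ((hC1 i j).differentiableOn one_ne_zero t ht).hasDerivWithinAt
  · rintro ⟨hP, hPT⟩
    have hcont : ContinuousOn P (Icc 0 T) := fun t ht => (hP t ht).2.continuousWithinAt
    have hF : ContinuousOn (fun t => -riccatiMap A C B D Q S R (P t)) (Icc 0 T) :=
      ((contDiffOn_riccatiMap_posSemidef (k := 0) hR).continuousOn.comp hcont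
        fun t ht => (hP t ht).1).neg
    have hunique := uniqueDiffOn_Icc hT
    refine ⟨contDiffOn_matrix_iff.1
      (contDiffOn_one_of_hasDerivWithinAt hunique (fun t ht => (hP t ht).2) hF),
      fun t ht => isHermitian_iff_isSymm.1 (hP t ht).1.isHermitian, fun t ht => (hP t ht).1,
      fun t ht => (heq t).2 (Matrix.ext fun i j => ?_), hPT⟩
    exact (hasDerivWithinAt_pi.1 (hasDerivWithinAt_pi.1 (hP t ht).2 i) j).derivWithin
      (hunique t ht)

theorem exists_isRiccatiPSol (A C : Matrix (Fin n) (Fin n) ℝ) (B D : Matrix (Fin n) (Fin m) ℝ)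
    (hR : R.PosDef) (hQS : (Q - Sᵀ * R⁻¹ * S).PosSemidef) (hT : 0 < T) :
    ∃ P, IsRiccatiPSol A C B D Q S R T P := by
  obtain ⟨X, hX0, hX⟩ :=
    exists_posSemidef_hasDerivWithinAt_riccatiMap A C B D hR hQS PosSemidef.zero hT.le
  refine ⟨fun t => X (T - t), (isRiccatiPSol_iff_hasDerivWithinAt hR hT).2
    ⟨fun t ht => ?_, by rw [sub_self, hX0]⟩⟩
  have hrev : T - t ∈ Icc 0 T := ⟨sub_nonneg.2 ht.2, sub_le_self T ht.1⟩
  have hderiv := hasDerivWithinAt_comp_const_sub (hX _ hrev).2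
  rw [preimage_const_sub_Icc, sub_self, sub_zero] at hderiv
  exact ⟨(hX _ hrev).1, hderiv⟩

theorem IsRiccatiPSol.eqOn (hR : R.PosDef) (hT : 0 < T) (h₁ : IsRiccatiPSol A C B D Q S R T P₁)
    (h₂ : IsRiccatiPSol A C B D Q S R T P₂) : EqOn P₁ P₂ (Icc 0 T) := by
  obtain ⟨hP₁, hT₁⟩ := (isRiccatiPSol_iff_hasDerivWithinAt hR hT).1 h₁
  obtain ⟨hP₂, hT₂⟩ := (isRiccatiPSol_iff_hasDerivWithinAt hR hT).1 h₂
  exact eqOn_Icc_of_hasDerivWithinAt_of_convex isClosed_setOf_posSemidef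
    convex_setOf_posSemidef (contDiffOn_riccatiMap_posSemidef hR).neg hP₁ hP₂
    (hT₁.trans hT₂.symm)

lemma IsRiccatiPSol.posSemidef_sub_iInf_eigenvalues (hR : R.PosDef)
    (hP : IsRiccatiPSol A C B D Q S R T P) {t : ℝ} (ht : t ∈ Icc 0 T) :
    (R + Dᵀ * P t * D - (⨅ i, hR.1.eigenvalues i) • (1 : Matrix (Fin m) (Fin m) ℝ)).PosSemidef := by
  rw [add_sub_right_comm]
  exact (posSemidef_sub_iInf_eigenvalues_smul_one hR.1).add
    (posSemidef_transpose_mul_mul_same (hP.2.2.1 t ht) D)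

end TerminalValueProblem

theorem riccati_P_solvability_general {n m : ℕ} (hm : 0 < m)
    (A C : Matrix (Fin n) (Fin n) ℝ) (B D : Matrix (Fin n) (Fin m) ℝ)
    (Q : Matrix (Fin n) (Fin n) ℝ) (S : Matrix (Fin m) (Fin n) ℝ)
    (R : Matrix (Fin m) (Fin m) ℝ)
    (hRpd : R.PosDef) (hQS : (Q - Sᵀ * R⁻¹ * S).PosSemidef)
    (T : ℝ) (hT : 0 < T) :
    (∃ P : ℝ → Matrix (Fin n) (Fin n) ℝ, IsRiccatiPSol A C B D Q S R T P ∧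
      (0 < ⨅ i, hRpd.1.eigenvalues i) ∧
      ∀ t ∈ Set.Icc (0:ℝ) T,
        ((R + Dᵀ * P t * D)
            - (⨅ i, hRpd.1.eigenvalues i) • (1 : Matrix (Fin m) (Fin m) ℝ)).PosSemidef)
    ∧ ∀ P₁ P₂ : ℝ → Matrix (Fin n) (Fin n) ℝ,
        IsRiccatiPSol A C B D Q S R T P₁ → IsRiccatiPSol A C B D Q S R T P₂ →
        ∀ t ∈ Set.Icc (0:ℝ) T, P₁ t = P₂ t := by
  have : NeZero m := ⟨hm.ne'⟩
  obtain ⟨P, hP⟩ := exists_isRiccatiPSol A C B D hRpd hQS hT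
  exact ⟨⟨P, hP, iInf_eigenvalues_pos hRpd, fun _ => hP.posSemidef_sub_iInf_eigenvalues hRpd⟩,
    fun _ _ h₁ h₂ => h₁.eqOn hRpd hT h₂⟩

/-- if `R > 0` and `Q - SᵀR⁻¹S > 0`, then for every `T > 0` the Riccati
terminal value problem admits a unique continuously differentiable symmetric positive
semi-definite solution `P` on `[0, T]`; moreover, with `δ > 0` the smallest eigenvalue
of `R`, one has `R + DᵀP(t)D ⪰ δ I` on `[0, T]`. -/
theorem riccati_P_solvability {n m : ℕ} (hn : 0 < n) (hm : 0 < m)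
    (A C : Matrix (Fin n) (Fin n) ℝ) (B D : Matrix (Fin n) (Fin m) ℝ)
    (Q : Matrix (Fin n) (Fin n) ℝ) (S : Matrix (Fin m) (Fin n) ℝ)
    (R : Matrix (Fin m) (Fin m) ℝ)
    (hQ : Q.IsSymm) (hRpd : R.PosDef) (hQS : (Q - Sᵀ * R⁻¹ * S).PosDef)
    (T : ℝ) (hT : 0 < T) :
    (∃ P : ℝ → Matrix (Fin n) (Fin n) ℝ, IsRiccatiPSol A C B D Q S R T P ∧
      (0 < ⨅ i, hRpd.1.eigenvalues i) ∧
      ∀ t ∈ Set.Icc (0:ℝ) T,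
        ((R + Dᵀ * P t * D)
            - (⨅ i, hRpd.1.eigenvalues i) • (1 : Matrix (Fin m) (Fin m) ℝ)).PosSemidef)
    ∧ ∀ P₁ P₂ : ℝ → Matrix (Fin n) (Fin n) ℝ,
        IsRiccatiPSol A C B D Q S R T P₁ → IsRiccatiPSol A C B D Q S R T P₂ →
        ∀ t ∈ Set.Icc (0:ℝ) T, P₁ t = P₂ t := by
  exact riccati_P_solvability_general hm A C B D Q S R hRpd hQS.posSemidef T hT
end

section
/- Assume R is positive definite, Q − SᵀR⁻¹S is positive definite, and Q + Q̄ − SᵀR⁻¹S is positive definite. Let T > 0 and let P : [0,T] → (symmetric n×n real matrices) be a continuously differentiable solution of the Riccati equation P′(t) + P(t)A + AᵀP(t) + CᵀP(t)C + Q − (BᵀP(t) + DᵀP(t)C + S)ᵀ(R + DᵀP(t)D)⁻¹(BᵀP(t) + DᵀP(t)C + S) = 0, P(T) = 0, with P(t) positive semi-definite for all t. Then the terminal value problem Π′(t) + Π(t)(A + Ā) + (A + Ā)ᵀΠ(t) + (C + C̄)ᵀP(t)(C + C̄) + Q + Q̄ − (BᵀΠ(t) + DᵀP(t)(C + C̄)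 + S)ᵀ(R + DᵀP(t)D)⁻¹(BᵀΠ(t) + DᵀP(t)(C + C̄) + S) = 0 for t ∈ [0,T], with Π(T) = 0, admits a unique continuously differentiable solution Π : [0,T] → (symmetric n×n real matrices) with Π(t) positive semi-definite for all t ∈ [0,T]. -/
open Matrix

/-- `Π` is a continuously differentiable, symmetric, positive semi-definite solution on
`[0, T]` of the mean field Riccati terminal value problem associated with a given `P`. -/
def IsRiccatiPiSol {n m : ℕ} (A Abar C Cbar : Matrix (Fin n) (Fin n) ℝ)
    (B D : Matrix (Fin n) (Fin m) ℝ) (Q Qbar : Matrix (Fin n) (Fin n) ℝ)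
    (S : Matrix (Fin m) (Fin n) ℝ) (R : Matrix (Fin m) (Fin m) ℝ)
    (T : ℝ) (P Pi0 : ℝ → Matrix (Fin n) (Fin n) ℝ) : Prop :=
  (∀ i j, ContDiffOn ℝ 1 (fun t => Pi0 t i j) (Set.Icc 0 T)) ∧
  (∀ t ∈ Set.Icc (0:ℝ) T, (Pi0 t).IsSymm) ∧
  (∀ t ∈ Set.Icc (0:ℝ) T, (Pi0 t).PosSemidef) ∧
  (∀ t ∈ Set.Icc (0:ℝ) T,
    matDerivWithin Pi0 (Set.Icc 0 T) t + Pi0 t * (A + Abar) + (A + Abar)ᵀ * Pi0 t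
      + (C + Cbar)ᵀ * P t * (C + Cbar) + Q + Qbar
      - (Bᵀ * Pi0 t + Dᵀ * P t * (C + Cbar) + S)ᵀ * (R + Dᵀ * P t * D)⁻¹
          * (Bᵀ * Pi0 t + Dᵀ * P t * (C + Cbar) + S) = 0) ∧
  Pi0 T = 0

/-!
A terminal value problem `X' + XF + FᵀX + G = XNX`, `X(b) = 0`, with `G` and `N` positive
semi-definite, is linearized by Radon's substitution `X = VU⁻¹`, where `U' = FU - NV`,
`V' = -(GU + FᵀV)`, `U(b) = 1` and `V(b) = 0`. Everything rests on the identity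
`(UᵀV)' = -(VᵀNV + UᵀGU)`, by which `UᵀV` decreases to `0` in the Loewner order. If `U(s)x = 0`,
then `⟨Ux, Vx⟩` vanishes at both ends of `[s, b]`, hence throughout; so `NVx = 0` there, `y = Ux`
solves `y' = Fy`, and `x = y(b) = 0`. Therefore `U` is invertible, and `X = U⁻ᵀ(UᵀV)U⁻¹` is positive
semi-definite. Uniqueness holds because the difference of two solutions solves a homogeneous linear
equation.

With `K = R + DᵀPD` and `L = DᵀP(C + C̄) + S`, completing the square brings the equation for `Π`
to this form, with `F = A + Ā - BK⁻¹L` and `N = BK⁻¹Bᵀ`; the remaining term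
`G = (C + C̄)ᵀP(C + C̄) + Q + Q̄ - LᵀK⁻¹L` is positive semi-definite because it is a Schur
complement in the sum of a congruence transform of `P` and the block matrix of `Q + Q̄`, `S`, `R`.
-/

section OrdinaryDifferentialEquations

open Set
open scoped NNReal

theorem norm_le_of_lipschitzWith {E F : Type*} [SeminormedAddCommGroup E]
    [SeminormedAddCommGroup F] {v : E → F} {K : ℝ≥0} (hv : LipschitzWith K v) (x : E) :
    ‖v x‖ ≤ K * ‖x‖ + ‖v 0‖ := by
  have := hv.norm_sub_le x 0
  rw [sub_zero] at this
  linarith [norm_le_norm_sub_add (v x) (v 0)]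

variable {E F : Type*} [NormedAddCommGroup E] [NormedSpace ℝ E]
  [NormedAddCommGroup F] [NormedSpace ℝ F] {a b : ℝ}

/-- The radial retraction of a normed space onto the closed ball of radius `r` about the origin,
used to truncate vector fields. -/
noncomputable def radialRetraction (r : ℝ) (x : E) : E := (r / max r ‖x‖) • x

theorem radialRetraction_of_norm_le {r : ℝ} (hr : 0 < r) {x : E} (hx : ‖x‖ ≤ r) :
    radialRetraction r x = x := by
  rw [radialRetraction, max_eq_left hx, div_self hr.ne', one_smul]

theorem norm_radialRetraction {r : ℝ} (hr : 0 < r) (x : E) :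
    ‖radialRetraction r x‖ = r / max r ‖x‖ * ‖x‖ := by
  rw [radialRetraction, norm_smul, Real.norm_of_nonneg (by positivity)]

theorem norm_radialRetraction_le {r : ℝ} (hr : 0 < r) (x : E) : ‖radialRetraction r x‖ ≤ r := by
  rw [norm_radialRetraction hr, div_mul_eq_mul_div, div_le_iff₀ (by positivity)]
  gcongr
  exact le_max_right _ _

theorem norm_radialRetraction_le_norm {r : ℝ} (hr : 0 < r) (x : E) :
    ‖radialRetraction r x‖ ≤ ‖x‖ := by
  rw [norm_radialRetraction hr]
  exact mul_le_of_le_one_left (norm_nonneg x) (div_le_one_of_le₀ (le_max_left _ _) (by positivity))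

theorem lipschitzWith_radialRetraction {r : ℝ} (hr : 0 < r) :
    LipschitzWith 2 (radialRetraction r : E → E) := by
  refine LipschitzWith.of_dist_le_mul fun x y ↦ ?_
  set p := max r ‖x‖
  set q := max r ‖y‖
  have hp : 0 < p := hr.trans_le (le_max_left _ _)
  have hq : 0 < q := hr.trans_le (le_max_left _ _)
  have split : radialRetraction r x - radialRetraction r y
      = (r / q) • (x - y) + (r / q * ((q - p) / p)) • x := by
    rw [radialRetraction, radialRetraction, smul_sub, sub_add_eq_add_sub, ← add_smul]
    congr 2
    field_simp
    ring
  have hrq : r / q ≤ 1 := div_le_one_of_le₀ (le_max_left _ _) hq.le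
  have hqp : |q - p| ≤ ‖x - y‖ := by
    rw [norm_sub_rev]
    exact (abs_max_sub_max_le_max r ‖y‖ r ‖x‖).trans (by simpa using abs_norm_sub_norm_le y x)
  have hxp : ‖x‖ / p ≤ 1 := div_le_one_of_le₀ (le_max_right _ _) hp.le
  rw [dist_eq_norm, dist_eq_norm, split]
  calc ‖(r / q) • (x - y) + (r / q * ((q - p) / p)) • x‖
      ≤ r / q * ‖x - y‖ + r / q * (|q - p| * (‖x‖ / p)) := by
        refine (norm_add_le _ _).trans_eq ?_
        rw [norm_smul, norm_smul, norm_mul, norm_div (q - p), Real.norm_of_nonneg (by positivity),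
          Real.norm_of_nonneg hp.le, Real.norm_eq_abs]
        ring
    _ ≤ 1 * ‖x - y‖ + 1 * (‖x - y‖ * 1) := by gcongr
    _ = (2 : ℝ≥0) * ‖x - y‖ := by push_cast; ring

/- Truncating `v` outside a ball makes it bounded, so that Picard–Lindelöf applies on all of
`[a, b]`; Grönwall's inequality keeps the solution in a ball where the truncation has no effect. -/
theorem exists_isIntegralCurveOn_Icc_of_lipschitzWith [CompleteSpace E] {v : ℝ → E → E} {K : ℝ≥0}
    (hab : a ≤ b) (hv : ∀ t ∈ Icc a b, LipschitzWith K (v t))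
    (hcont : ∀ x, ContinuousOn (v · x) (Icc a b)) (x₀ : E) :
    ∃ x, x a = x₀ ∧ IsIntegralCurveOn x v (Icc a b) := by
  obtain ⟨M, hM⟩ := isCompact_Icc.exists_bound_of_continuousOn (hcont 0)
  have hM₀ : 0 ≤ M := (norm_nonneg _).trans (hM a (left_mem_Icc.2 hab))
  lift M to ℝ≥0 using hM₀
  have growth : ∀ t ∈ Icc a b, ∀ x, ‖v t x‖ ≤ K * ‖x‖ + M := fun t ht x ↦
    (norm_le_of_lipschitzWith (hv t ht) x).trans (by gcongr; exact hM t ht)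
  obtain ⟨r, hr, hgr⟩ : ∃ r : ℝ≥0, 0 < r ∧ gronwallBound ‖x₀‖ K M (b - a) ≤ r :=
    ⟨(gronwallBound ‖x₀‖ K M (b - a)).toNNReal + 1, by positivity,
      (Real.le_coe_toNNReal _).trans (by simp)⟩
  have hpl : IsPicardLindelof (fun t x ↦ v t (radialRetraction r x))
      (⟨a, left_mem_Icc.2 hab⟩ : Icc a b) x₀ ((K * r + M) * (b - a).toNNReal) 0 (K * r + M)
      (K * 2) :=
    { lipschitzOnWith := fun t ht ↦
        ((hv t ht).comp (lipschitzWith_radialRetraction hr)).lipschitzOnWith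
      continuousOn := fun x _ ↦ hcont _
      norm_le := fun t ht x _ ↦ (growth t ht _).trans (by
        push_cast
        gcongr
        exact norm_radialRetraction_le hr x)
      mul_max_le := by simp [hab] }
  obtain ⟨x, hxa, hx⟩ := hpl.exists_eq_forall_mem_Icc_hasDerivWithinAt₀
  have norm_deriv_le : ∀ t ∈ Ico a b,
      ‖v t (radialRetraction r (x t))‖ ≤ K * ‖x t‖ + M := fun t ht ↦
    (growth t (Ico_subset_Icc_self ht) _).trans <| by
      gcongr
      exact norm_radialRetraction_le_norm hr _
  have norm_le : ∀ t ∈ Icc a b, ‖x t‖ ≤ r := fun t ht ↦ calc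
    ‖x t‖ ≤ gronwallBound ‖x₀‖ K M (t - a) :=
      norm_le_gronwallBound_of_norm_deriv_right_le (HasDerivWithinAt.continuousOn hx)
        (fun s hs ↦
          (hx s (Ico_subset_Icc_self hs)).mono_of_mem_nhdsWithin (Icc_mem_nhdsGE_of_mem hs))
        (by rw [← hxa]) norm_deriv_le t ht
    _ ≤ gronwallBound ‖x₀‖ K M (b - a) :=
      gronwallBound_mono (norm_nonneg _) M.coe_nonneg K.coe_nonneg (by linarith [ht.2])
    _ ≤ r := hgr
  refine ⟨x, hxa, fun t ht ↦ ?_⟩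
  rw [← radialRetraction_of_norm_le hr (norm_le t ht)]
  exact hx t ht

theorem exists_isIntegralCurveOn_Icc_of_lipschitzWith_right [CompleteSpace E] {v : ℝ → E → E}
    {K : ℝ≥0} (hab : a ≤ b) (hv : ∀ t ∈ Icc a b, LipschitzWith K (v t))
    (hcont : ∀ x, ContinuousOn (v · x) (Icc a b)) (x₁ : E) :
    ∃ x, x b = x₁ ∧ IsIntegralCurveOn x v (Icc a b) := by
  have maps : MapsTo Neg.neg (Icc (-b) (-a)) (Icc a b) := fun t ht ↦
    ⟨le_neg_of_le_neg ht.2, neg_le_of_neg_le ht.1⟩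
  obtain ⟨x, hx₁, hx⟩ := exists_isIntegralCurveOn_Icc_of_lipschitzWith (neg_le_neg hab)
    (v := fun t x ↦ -v (-t) x) (fun t ht ↦ (hv (-t) (maps ht)).neg)
    (fun x ↦ ((hcont x).comp continuousOn_neg maps).neg) x₁
  refine ⟨fun t ↦ x (-t), hx₁, ?_⟩
  convert hx.comp_mul (-1) using 1
  · ext; simp
  · ext; simp
  · ext; simp [and_comm]

theorem eqOn_Icc_of_isIntegralCurveOn {v : ℝ → E → E} {K : ℝ≥0}
    (hv : ∀ t ∈ Icc a b, LipschitzWith K (v t)) {x y : ℝ → E}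
    (hx : IsIntegralCurveOn x v (Icc a b)) (hy : IsIntegralCurveOn y v (Icc a b)) {t₀ : ℝ}
    (ht₀ : t₀ ∈ Icc a b) (h₀ : x t₀ = y t₀) : EqOn x y (Icc a b) := by
  have hleft : Icc a t₀ ⊆ Icc a b := Icc_subset_Icc_right ht₀.2
  have hright : Icc t₀ b ⊆ Icc a b := Icc_subset_Icc_left ht₀.1
  have left_deriv {z} (hz : IsIntegralCurveOn z v (Icc a b)) :
      ∀ t ∈ Ioc a t₀, HasDerivWithinAt z (v t (z t)) (Iic t) t := fun t ht ↦
    (hz.mono hleft t (Ioc_subset_Icc_self ht)).mono_of_mem_nhdsWithin (Icc_mem_nhdsLE_of_mem ht)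
  have right_deriv {z} (hz : IsIntegralCurveOn z v (Icc a b)) :
      ∀ t ∈ Ico t₀ b, HasDerivWithinAt z (v t (z t)) (Ici t) t := fun t ht ↦
    (hz.mono hright t (Ico_subset_Icc_self ht)).mono_of_mem_nhdsWithin (Icc_mem_nhdsGE_of_mem ht)
  rw [← Icc_union_Icc_eq_Icc ht₀.1 ht₀.2]
  refine EqOn.union ?_ ?_
  · exact ODE_solution_unique_of_mem_Icc_left (s := fun _ ↦ univ)
      (fun t ht ↦ (hv t (hleft (Ioc_subset_Icc_self ht))).lipschitzOnWith)
      (hx.continuousOn.mono hleft) (left_deriv hx) (fun _ _ ↦ mem_univ _)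
      (hy.continuousOn.mono hleft) (left_deriv hy) (fun _ _ ↦ mem_univ _) h₀
  · exact ODE_solution_unique_of_mem_Icc_right (s := fun _ ↦ univ)
      (fun t ht ↦ (hv t (hright (Ico_subset_Icc_self ht))).lipschitzOnWith)
      (hx.continuousOn.mono hright) (right_deriv hx) (fun _ _ ↦ mem_univ _)
      (hy.continuousOn.mono hright) (right_deriv hy) (fun _ _ ↦ mem_univ _) h₀

theorem exists_lipschitzWith_of_continuousOn_Icc {A : ℝ → E →L[ℝ] F}
    (hA : ContinuousOn A (Icc a b)) : ∃ K : ℝ≥0, ∀ t ∈ Icc a b, LipschitzWith K (A t) := by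
  obtain ⟨C, hC⟩ := isCompact_Icc.exists_bound_of_continuousOn hA
  exact ⟨C.toNNReal, fun t ht ↦ ContinuousLinearMap.lipschitzWith_of_opNorm_le
    ((hC t ht).trans (Real.le_coe_toNNReal C))⟩

theorem exists_isIntegralCurveOn_Icc_linear [CompleteSpace E] {A : ℝ → E →L[ℝ] E}
    (hab : a ≤ b) (hA : ContinuousOn A (Icc a b)) (x₁ : E) :
    ∃ x, x b = x₁ ∧ IsIntegralCurveOn x (fun t ↦ A t) (Icc a b) := by
  obtain ⟨K, hK⟩ := exists_lipschitzWith_of_continuousOn_Icc hA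
  exact exists_isIntegralCurveOn_Icc_of_lipschitzWith_right hab hK
    (fun x ↦ hA.clm_apply continuousOn_const) x₁

theorem eqOn_zero_of_isIntegralCurveOn_Icc_linear {A : ℝ → E →L[ℝ] E}
    (hA : ContinuousOn A (Icc a b)) {x : ℝ → E}
    (hx : IsIntegralCurveOn x (fun t ↦ A t) (Icc a b)) {t₀ : ℝ} (ht₀ : t₀ ∈ Icc a b)
    (h₀ : x t₀ = 0) : EqOn x 0 (Icc a b) := by
  obtain ⟨K, hK⟩ := exists_lipschitzWith_of_continuousOn_Icc hA
  refine eqOn_Icc_of_isIntegralCurveOn hK hx (fun t _ ↦ ?_) ht₀ h₀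
  exact (hasDerivWithinAt_const t _ 0).congr_deriv (map_zero (A t)).symm

end OrdinaryDifferentialEquations

section RiccatiEquation

open Set
open scoped Ring

variable {𝔸 : Type*} [NormedRing 𝔸] [NormedAlgebra ℝ 𝔸] {a b : ℝ} {s : Set ℝ}

/-- The vector field of the operator Riccati equation `X' + XF + EX + G - XNX = 0`. -/
def riccatiField (F E G N : ℝ → 𝔸) (t : ℝ) (X : 𝔸) : 𝔸 :=
  X * N t * X - X * F t - E t * X - G t

/-- The linear vector field `(U, V) ↦ (FU - NV, -(GU + EV))` on pairs, whose solutions parametrize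
the solutions `VU⁻¹` of the Riccati equation; for matrices with `E = Fᵀ` it is the Hamiltonian
system of the underlying control problem. -/
noncomputable def hamiltonianField (F E G N : ℝ → 𝔸) (t : ℝ) : 𝔸 × 𝔸 →L[ℝ] 𝔸 × 𝔸 :=
  ((ContinuousLinearMap.mul ℝ 𝔸 (F t)).comp (.fst ℝ 𝔸 𝔸) -
      (ContinuousLinearMap.mul ℝ 𝔸 (N t)).comp (.snd ℝ 𝔸 𝔸)).prod
    (-((ContinuousLinearMap.mul ℝ 𝔸 (G t)).comp (.fst ℝ 𝔸 𝔸) +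
      (ContinuousLinearMap.mul ℝ 𝔸 (E t)).comp (.snd ℝ 𝔸 𝔸)))

variable {F E G N : ℝ → 𝔸}

theorem continuousOn_hamiltonianField (hF : ContinuousOn F s) (hE : ContinuousOn E s)
    (hG : ContinuousOn G s) (hN : ContinuousOn N s) :
    ContinuousOn (hamiltonianField F E G N) s :=
  (ContinuousLinearMap.prodₗᵢ ℝ).continuous.comp_continuousOn
    (f := fun t ↦ ((ContinuousLinearMap.mul ℝ 𝔸 (F t)).comp (.fst ℝ 𝔸 𝔸) -
        (ContinuousLinearMap.mul ℝ 𝔸 (N t)).comp (.snd ℝ 𝔸 𝔸),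
      -((ContinuousLinearMap.mul ℝ 𝔸 (G t)).comp (.fst ℝ 𝔸 𝔸) +
        (ContinuousLinearMap.mul ℝ 𝔸 (E t)).comp (.snd ℝ 𝔸 𝔸)))) (by fun_prop)

theorem hasDerivWithinAt_fst_of_isIntegralCurveOn_hamiltonianField {z : ℝ → 𝔸 × 𝔸}
    (hz : IsIntegralCurveOn z (fun t ↦ hamiltonianField F E G N t) s) {t : ℝ} (ht : t ∈ s) :
    HasDerivWithinAt (fun τ ↦ (z τ).1) (F t * (z t).1 - N t * (z t).2) s t :=
  (ContinuousLinearMap.fst ℝ 𝔸 𝔸).hasFDerivAt.comp_hasDerivWithinAt t (hz t ht)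

theorem hasDerivWithinAt_snd_of_isIntegralCurveOn_hamiltonianField {z : ℝ → 𝔸 × 𝔸}
    (hz : IsIntegralCurveOn z (fun t ↦ hamiltonianField F E G N t) s) {t : ℝ} (ht : t ∈ s) :
    HasDerivWithinAt (fun τ ↦ (z τ).2) (-(G t * (z t).1 + E t * (z t).2)) s t :=
  (ContinuousLinearMap.snd ℝ 𝔸 𝔸).hasFDerivAt.comp_hasDerivWithinAt t (hz t ht)

theorem hasDerivWithinAt_ringInverse [CompleteSpace 𝔸] {U : ℝ → 𝔸} {U' : 𝔸} {t : ℝ}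
    (hU : HasDerivWithinAt U U' s t) (hunit : IsUnit (U t)) :
    HasDerivWithinAt (fun τ ↦ (U τ)⁻¹ʳ) (-((U t)⁻¹ʳ * U' * (U t)⁻¹ʳ)) s t := by
  obtain ⟨u, hu⟩ := hunit
  have hinv := hasFDerivAt_ringInverse (𝕜 := ℝ) u
  rw [hu] at hinv
  exact (hinv.comp_hasDerivWithinAt t hU).congr_deriv (by simp [← hu])

theorem isIntegralCurveOn_riccatiField_of_hamiltonianField [CompleteSpace 𝔸] {z : ℝ → 𝔸 × 𝔸}
    (hz : IsIntegralCurveOn z (fun t ↦ hamiltonianField F E G N t) s)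
    (hunit : ∀ t ∈ s, IsUnit (z t).1) :
    IsIntegralCurveOn (fun t ↦ (z t).2 * (z t).1⁻¹ʳ) (riccatiField F E G N) s := by
  intro t ht
  have hU := hasDerivWithinAt_fst_of_isIntegralCurveOn_hamiltonianField hz ht
  have hV := hasDerivWithinAt_snd_of_isIntegralCurveOn_hamiltonianField hz ht
  refine (hV.mul (hasDerivWithinAt_ringInverse hU (hunit t ht))).congr_deriv ?_
  have hcancel := Ring.mul_inverse_cancel _ (hunit t ht)
  rw [riccatiField]
  linear_combination (norm := noncomm_ring)
    (-((z t).2 * (z t).1⁻¹ʳ * F t) - G t) * hcancel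

theorem eqOn_of_isIntegralCurveOn_riccatiField (hF : ContinuousOn F (Icc a b))
    (hE : ContinuousOn E (Icc a b)) (hN : ContinuousOn N (Icc a b)) {X Y : ℝ → 𝔸}
    (hX : IsIntegralCurveOn X (riccatiField F E G N) (Icc a b))
    (hY : IsIntegralCurveOn Y (riccatiField F E G N) (Icc a b)) {t₀ : ℝ} (ht₀ : t₀ ∈ Icc a b)
    (h₀ : X t₀ = Y t₀) : EqOn X Y (Icc a b) := by
  have hXc := hX.continuousOn
  have hYc := hY.continuousOn
  let A (t : ℝ) : 𝔸 →L[ℝ] 𝔸 := ContinuousLinearMap.mul ℝ 𝔸 (Y t * N t - E t) +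
    (ContinuousLinearMap.mul ℝ 𝔸).flip (N t * X t - F t)
  have hA : ContinuousOn A (Icc a b) := by fun_prop
  have hdiff : IsIntegralCurveOn (X - Y) (fun t ↦ A t) (Icc a b) := fun t ht ↦
    ((hX t ht).sub (hY t ht)).congr_deriv <| by
      simp only [A, riccatiField, Pi.sub_apply, _root_.add_apply,
        ContinuousLinearMap.flip_apply, ContinuousLinearMap.mul_apply']
      noncomm_ring
  have hzero := eqOn_zero_of_isIntegralCurveOn_Icc_linear hA hdiff ht₀ (sub_eq_zero.2 h₀)
  exact fun t ht ↦ sub_eq_zero.1 (hzero ht)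

end RiccatiEquation

section Matrices

open Set
open scoped Ring Matrix.Norms.Operator MatrixOrder

variable {ι : Type*} [Fintype ι] {a b : ℝ}

theorem hasDerivWithinAt_linearMap_comp {E F : Type*} [NormedAddCommGroup E] [NormedSpace ℝ E]
    [FiniteDimensional ℝ E] [NormedAddCommGroup F] [NormedSpace ℝ F] (L : E →ₗ[ℝ] F) {f : ℝ → E}
    {f' : E} {s : Set ℝ} {t : ℝ} (hf : HasDerivWithinAt f f' s t) :
    HasDerivWithinAt (fun τ ↦ L (f τ)) (L f') s t :=
  L.toContinuousLinearMap.hasFDerivAt.comp_hasDerivWithinAt t hf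

theorem hasDerivWithinAt_transpose {X : ℝ → Matrix ι ι ℝ} {X' : Matrix ι ι ℝ} {s : Set ℝ} {t : ℝ}
    (hX : HasDerivWithinAt X X' s t) : HasDerivWithinAt (fun τ ↦ (X τ)ᵀ) X'ᵀ s t :=
  hasDerivWithinAt_linearMap_comp (transposeLinearEquiv ι ι ℝ ℝ).toLinearMap hX

theorem hasDerivWithinAt_mulVec {X : ℝ → Matrix ι ι ℝ} {X' : Matrix ι ι ℝ} {s : Set ℝ} {t : ℝ}
    (hX : HasDerivWithinAt X X' s t) (x : ι → ℝ) :
    HasDerivWithinAt (fun τ ↦ X τ *ᵥ x) (X' *ᵥ x) s t :=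
  hasDerivWithinAt_linearMap_comp ((mulVecBilin ℝ ℝ).flip x) hX

theorem hasDerivWithinAt_dotProduct_mulVec {X : ℝ → Matrix ι ι ℝ} {X' : Matrix ι ι ℝ} {s : Set ℝ}
    {t : ℝ} (hX : HasDerivWithinAt X X' s t) (x : ι → ℝ) :
    HasDerivWithinAt (fun τ ↦ x ⬝ᵥ X τ *ᵥ x) (x ⬝ᵥ X' *ᵥ x) s t :=
  hasDerivWithinAt_linearMap_comp (dotProductBilin ℝ ℝ x) (hasDerivWithinAt_mulVec hX x)

theorem dotProduct_transpose_mul_mulVec {κ R : Type*} [Fintype κ] [CommSemiring R]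
    (K M : Matrix κ ι R) (x : ι → R) : x ⬝ᵥ (Kᵀ * M) *ᵥ x = (K *ᵥ x) ⬝ᵥ (M *ᵥ x) := by
  rw [← mulVec_mulVec, dotProduct_mulVec, vecMul_transpose]

theorem dotProduct_mulVec_mono {X Y : Matrix ι ι ℝ} (h : X ≤ Y) (x : ι → ℝ) :
    x ⬝ᵥ X *ᵥ x ≤ x ⬝ᵥ Y *ᵥ x := by
  simpa [sub_mulVec] using (Matrix.le_iff.1 h).dotProduct_mulVec_nonneg x

theorem antitoneOn_dotProduct_mulVec {W W' : ℝ → Matrix ι ι ℝ}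
    (hW : ∀ t ∈ Icc a b, HasDerivWithinAt W (W' t) (Icc a b) t)
    (hW' : ∀ t ∈ Icc a b, W' t ≤ 0) (x : ι → ℝ) :
    AntitoneOn (fun t ↦ x ⬝ᵥ W t *ᵥ x) (Icc a b) := by
  have hderiv := fun t ht ↦ hasDerivWithinAt_dotProduct_mulVec (hW t ht) x
  refine antitoneOn_of_hasDerivWithinAt_nonpos (convex_Icc a b)
    (HasDerivWithinAt.continuousOn hderiv)
    (fun t ht ↦ (hderiv t (interior_subset ht)).mono interior_subset) fun t ht ↦ ?_
  simpa using dotProduct_mulVec_mono (hW' t (interior_subset ht)) x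

theorem antitoneOn_of_hasDerivWithinAt_le_zero {W W' : ℝ → Matrix ι ι ℝ}
    (hW : ∀ t ∈ Icc a b, HasDerivWithinAt W (W' t) (Icc a b) t)
    (hW' : ∀ t ∈ Icc a b, W' t ≤ 0) : AntitoneOn W (Icc a b) := by
  intro s hs t ht hst
  have hsub : ∀ τ ∈ Icc a b, HasDerivWithinAt (fun τ ↦ W τ - W t) (W' τ) (Icc a b) τ :=
    fun τ hτ ↦ (hW τ hτ).sub_const _
  have hsymm : ∀ τ ∈ Icc a b, (W' τ)ᵀ = W' τ := fun τ hτ ↦ by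
    simpa [IsHermitian] using (Matrix.le_iff.1 (hW' τ hτ)).isHermitian
  have heq : W s - W t = (W s - W t)ᵀ :=
    eqOn_Icc_of_isIntegralCurveOn (v := fun τ _ ↦ W' τ) (fun _ _ ↦ LipschitzWith.const _) hsub
      (fun τ hτ ↦ (hasDerivWithinAt_transpose (hsub τ hτ)).congr_deriv (hsymm τ hτ)) ht (by simp) hs
  refine Matrix.le_iff.2 (.of_dotProduct_mulVec_nonneg heq.symm fun x ↦ ?_)
  simpa [sub_mulVec] using antitoneOn_dotProduct_mulVec hW hW' x hs ht hst

variable [DecidableEq ι]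

theorem hasDerivWithinAt_transpose_mul_of_hamiltonianField {F G N : ℝ → Matrix ι ι ℝ} {s : Set ℝ}
    {z : ℝ → Matrix ι ι ℝ × Matrix ι ι ℝ}
    (hz : IsIntegralCurveOn z (fun t ↦ hamiltonianField F (fun t ↦ (F t)ᵀ) G N t) s) {t : ℝ}
    (ht : t ∈ s) (hNsymm : (N t).IsSymm) :
    HasDerivWithinAt (fun τ ↦ (z τ).1ᵀ * (z τ).2)
      (-((z t).2ᵀ * N t * (z t).2 + (z t).1ᵀ * G t * (z t).1)) s t := by
  have hU := hasDerivWithinAt_fst_of_isIntegralCurveOn_hamiltonianField hz ht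
  have hV := hasDerivWithinAt_snd_of_isIntegralCurveOn_hamiltonianField hz ht
  refine ((hasDerivWithinAt_transpose hU).mul hV).congr_deriv ?_
  rw [transpose_sub, transpose_mul, transpose_mul, hNsymm.eq]
  noncomm_ring

variable {F G N : ℝ → Matrix ι ι ℝ} {z : ℝ → Matrix ι ι ℝ × Matrix ι ι ℝ}

theorem antitoneOn_transpose_mul_of_hamiltonianField
    (hz : IsIntegralCurveOn z (fun t ↦ hamiltonianField F (fun t ↦ (F t)ᵀ) G N t) (Icc a b))
    (hG : ∀ t ∈ Icc a b, (G t).PosSemidef) (hN : ∀ t ∈ Icc a b, (N t).PosSemidef) :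
    AntitoneOn (fun t ↦ (z t).1ᵀ * (z t).2) (Icc a b) := by
  refine antitoneOn_of_hasDerivWithinAt_le_zero (fun t ht ↦
    hasDerivWithinAt_transpose_mul_of_hamiltonianField hz ht (hN t ht).isHermitian) fun t ht ↦ ?_
  rw [Left.neg_nonpos_iff, Matrix.nonneg_iff_posSemidef]
  exact ((hN t ht).conjTranspose_mul_mul_same _).add ((hG t ht).conjTranspose_mul_mul_same _)

theorem mulVec_fst_dotProduct_mulVec_snd_eq_zero_of_endpoints
    (hz : IsIntegralCurveOn z (fun t ↦ hamiltonianField F (fun t ↦ (F t)ᵀ) G N t) (Icc a b))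
    (hG : ∀ t ∈ Icc a b, (G t).PosSemidef) (hN : ∀ t ∈ Icc a b, (N t).PosSemidef) {x : ι → ℝ}
    (ha : (z a).1 *ᵥ x = 0) (hb : (z b).2 *ᵥ x = 0) :
    ∀ t ∈ Icc a b, ((z t).1 *ᵥ x) ⬝ᵥ ((z t).2 *ᵥ x) = 0 := by
  intro t ht
  have hanti := antitoneOn_transpose_mul_of_hamiltonianField hz hG hN
  have hab : a ≤ b := ht.1.trans ht.2
  have hle := dotProduct_mulVec_mono (hanti (left_mem_Icc.2 hab) ht ht.1) x
  have hge := dotProduct_mulVec_mono (hanti ht (right_mem_Icc.2 hab) ht.2) x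
  simp only [dotProduct_transpose_mul_mulVec, ha, hb, zero_dotProduct, dotProduct_zero] at hle hge
  exact le_antisymm hle hge

theorem mulVec_mulVec_snd_eq_zero_of_endpoints
    (hz : IsIntegralCurveOn z (fun t ↦ hamiltonianField F (fun t ↦ (F t)ᵀ) G N t) (Icc a b))
    (hG : ∀ t ∈ Icc a b, (G t).PosSemidef) (hN : ∀ t ∈ Icc a b, (N t).PosSemidef)
    (hab : a < b) {x : ι → ℝ} (ha : (z a).1 *ᵥ x = 0) (hb : (z b).2 *ᵥ x = 0) :
    ∀ t ∈ Icc a b, N t *ᵥ (z t).2 *ᵥ x = 0 := by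
  intro t ht
  have hconst : ∀ τ ∈ Icc a b, x ⬝ᵥ ((z τ).1ᵀ * (z τ).2) *ᵥ x = 0 := fun τ hτ ↦ by
    rw [dotProduct_transpose_mul_mulVec]
    exact mulVec_fst_dotProduct_mulVec_snd_eq_zero_of_endpoints hz hG hN ha hb τ hτ
  have hderiv := hasDerivWithinAt_dotProduct_mulVec
    (hasDerivWithinAt_transpose_mul_of_hamiltonianField hz ht (hN t ht).isHermitian) x
  have hsum := (uniqueDiffOn_Icc hab t ht).eq_deriv _ hderiv
    ((hasDerivWithinAt_const t (Icc a b) 0).congr hconst (hconst t ht))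
  rw [neg_mulVec, dotProduct_neg, neg_eq_zero, add_mulVec, dotProduct_add, Matrix.mul_assoc,
    Matrix.mul_assoc, dotProduct_transpose_mul_mulVec, dotProduct_transpose_mul_mulVec,
    ← mulVec_mulVec, ← mulVec_mulVec] at hsum
  have hNnonneg := (hN t ht).dotProduct_mulVec_nonneg ((z t).2 *ᵥ x)
  have hGnonneg := (hG t ht).dotProduct_mulVec_nonneg ((z t).1 *ᵥ x)
  rw [← (hN t ht).dotProduct_mulVec_zero_iff]
  rw [star_trivial] at hNnonneg hGnonneg ⊢
  linarith

theorem mulVec_fst_right_eq_zero_of_endpoints (hF : ContinuousOn F (Icc a b))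
    (hz : IsIntegralCurveOn z (fun t ↦ hamiltonianField F (fun t ↦ (F t)ᵀ) G N t) (Icc a b))
    (hG : ∀ t ∈ Icc a b, (G t).PosSemidef) (hN : ∀ t ∈ Icc a b, (N t).PosSemidef)
    (hab : a < b) {x : ι → ℝ} (ha : (z a).1 *ᵥ x = 0) (hb : (z b).2 *ᵥ x = 0) :
    (z b).1 *ᵥ x = 0 := by
  have hNV := mulVec_mulVec_snd_eq_zero_of_endpoints hz hG hN hab ha hb
  let mulVecL : Matrix ι ι ℝ →ₗ[ℝ] (ι → ℝ) →L[ℝ] (ι → ℝ) :=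
    LinearMap.toContinuousLinearMap.toLinearMap ∘ₗ mulVecBilin ℝ ℝ
  have hUx : IsIntegralCurveOn (fun t ↦ (z t).1 *ᵥ x)
      (fun t ↦ mulVecL (F t)) (Icc a b) := fun t ht ↦
    (hasDerivWithinAt_mulVec
      (hasDerivWithinAt_fst_of_isIntegralCurveOn_hamiltonianField hz ht) x).congr_deriv <| by
        simp [mulVecL, sub_mulVec, ← mulVec_mulVec, hNV t ht]
  exact eqOn_zero_of_isIntegralCurveOn_Icc_linear
    (mulVecL.continuous_of_finiteDimensional.comp_continuousOn hF) hUx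
    (left_mem_Icc.2 hab.le) ha (right_mem_Icc.2 hab.le)

theorem isUnit_fst_of_hamiltonianField (hF : ContinuousOn F (Icc a b))
    (hz : IsIntegralCurveOn z (fun t ↦ hamiltonianField F (fun t ↦ (F t)ᵀ) G N t) (Icc a b))
    (hzb : z b = (1, 0)) (hG : ∀ t ∈ Icc a b, (G t).PosSemidef)
    (hN : ∀ t ∈ Icc a b, (N t).PosSemidef) : ∀ t ∈ Icc a b, IsUnit (z t).1 := by
  intro s hs
  obtain rfl | hsb := hs.2.eq_or_lt
  · simp [hzb]
  have hsub : Icc s b ⊆ Icc a b := Icc_subset_Icc_left hs.1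
  rw [← mulVec_injective_iff_isUnit, ← coe_mulVecLin, injective_iff_map_eq_zero]
  intro x hx
  simpa [hzb] using mulVec_fst_right_eq_zero_of_endpoints (hF.mono hsub) (hz.mono hsub)
    (fun t ht ↦ hG t (hsub ht)) (fun t ht ↦ hN t (hsub ht)) hsb hx (by simp [hzb])

theorem exists_posSemidef_isIntegralCurveOn_riccatiField (hab : a ≤ b)
    (hF : ContinuousOn F (Icc a b)) (hGc : ContinuousOn G (Icc a b))
    (hNc : ContinuousOn N (Icc a b)) (hG : ∀ t ∈ Icc a b, (G t).PosSemidef)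
    (hN : ∀ t ∈ Icc a b, (N t).PosSemidef) :
    ∃ X, X b = 0 ∧ IsIntegralCurveOn X (riccatiField F (fun t ↦ (F t)ᵀ) G N) (Icc a b) ∧
      ∀ t ∈ Icc a b, (X t).PosSemidef := by
  obtain ⟨z, hzb, hz⟩ := exists_isIntegralCurveOn_Icc_linear hab
    (continuousOn_hamiltonianField hF (continuous_id.matrix_transpose.comp_continuousOn hF) hGc hNc)
    ((1, 0) : Matrix ι ι ℝ × Matrix ι ι ℝ)
  have hunit := isUnit_fst_of_hamiltonianField hF hz hzb hG hN
  refine ⟨fun t ↦ (z t).2 * (z t).1⁻¹ʳ, by simp [hzb],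
    isIntegralCurveOn_riccatiField_of_hamiltonianField hz hunit, fun t ht ↦ ?_⟩
  have hW : ((z t).1ᵀ * (z t).2).PosSemidef := by
    simpa [hzb, Matrix.nonneg_iff_posSemidef] using
      antitoneOn_transpose_mul_of_hamiltonianField hz hG hN ht (right_mem_Icc.2 hab) ht.2
  have hX := hW.conjTranspose_mul_mul_same (z t).1⁻¹ʳ
  rwa [conjTranspose_eq_transpose_of_trivial, ← Matrix.mul_assoc, ← transpose_mul,
    Ring.mul_inverse_cancel _ (hunit t ht), transpose_one, Matrix.one_mul] at hX

end Matrices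

section EntrywiseDerivative

variable {n : ℕ} {X : ℝ → Matrix (Fin n) (Fin n) ℝ} {s : Set ℝ} {t : ℝ}

theorem hasDerivWithinAt_matrix_iff {X' : Matrix (Fin n) (Fin n) ℝ} :
    HasDerivWithinAt X X' s t ↔ ∀ i j, HasDerivWithinAt (fun τ ↦ X τ i j) (X' i j) s t :=
  hasDerivWithinAt_pi.trans (forall_congr' fun _ ↦ hasDerivWithinAt_pi)

theorem hasDerivWithinAt_matDerivWithin
    (hX : ∀ i j, DifferentiableWithinAt ℝ (fun τ ↦ X τ i j) s t) :
    HasDerivWithinAt X (matDerivWithin X s t) s t :=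
  hasDerivWithinAt_matrix_iff.2 fun i j ↦ (hX i j).hasDerivWithinAt

theorem matDerivWithin_eq {X' : Matrix (Fin n) (Fin n) ℝ} (hX : HasDerivWithinAt X X' s t)
    (hs : UniqueDiffWithinAt ℝ s t) : matDerivWithin X s t = X' := by
  ext i j
  exact (hasDerivWithinAt_matrix_iff.1 hX i j).derivWithin hs

theorem contDiffOn_one_entry {X' : ℝ → Matrix (Fin n) (Fin n) ℝ} (hs : UniqueDiffOn ℝ s)
    (hX : ∀ t ∈ s, HasDerivWithinAt X (X' t) s t) (hX' : ContinuousOn X' s) (i j : Fin n) :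
    ContDiffOn ℝ 1 (fun t ↦ X t i j) s := by
  have hentry := fun t ht ↦ hasDerivWithinAt_matrix_iff.1 (hX t ht) i j
  have hcont : ContinuousOn (fun t ↦ X' t i j) s := by fun_prop
  exact (contDiffOn_one_iff_derivWithin hs).2 ⟨fun t ht ↦ (hentry t ht).differentiableWithinAt,
    hcont.congr fun t ht ↦ (hentry t ht).derivWithin (hs t ht)⟩

end EntrywiseDerivative

section CompletingTheSquare

theorem posSemidef_fromBlocks_iff {ι κ : Type*} [Finite ι] [Fintype κ] [DecidableEq κ]
    {R : Matrix κ κ ℝ} (hR : R.PosDef) (Q : Matrix ι ι ℝ) (S : Matrix κ ι ℝ) :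
    (fromBlocks Q Sᵀ S R).PosSemidef ↔ (Q - Sᵀ * R⁻¹ * S).PosSemidef := by
  let := hR.isUnit.invertible
  simpa using PosDef.fromBlocks₂₂ Q Sᵀ hR

variable {ι κ : Type*} [Fintype ι]

/-- The weight `R + DᵀPD` of the control in the quadratic form to be minimized. -/
def controlWeight (D : Matrix ι κ ℝ) (R : Matrix κ κ ℝ) (P : Matrix ι ι ℝ) : Matrix κ κ ℝ :=
  R + Dᵀ * P * D

/-- The part `DᵀPC + S` of the coupling between control and state that does not involve the
unknown of the Riccati equation. -/
def crossWeight (C : Matrix ι ι ℝ) (D : Matrix ι κ ℝ) (S : Matrix κ ι ℝ) (P : Matrix ι ι ℝ) :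
    Matrix κ ι ℝ :=
  Dᵀ * P * C + S

variable {A C P Q X : Matrix ι ι ℝ} {B D : Matrix ι κ ℝ} {S : Matrix κ ι ℝ} {R : Matrix κ κ ℝ}

theorem posDef_controlWeight [Finite κ] (hR : R.PosDef) (hP : P.PosSemidef) (D : Matrix ι κ ℝ) :
    (controlWeight D R P).PosDef :=
  hR.add_posSemidef (hP.conjTranspose_mul_mul_same D)

variable [Fintype κ] [DecidableEq κ]

/-- The drift `A - BK⁻¹L` of the state after the shift of the control that removes the cross
term, where `K` is the `controlWeight` and `L` the `crossWeight`. -/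
noncomputable def shiftedDrift (A : Matrix ι ι ℝ) (B : Matrix ι κ ℝ) (C : Matrix ι ι ℝ)
    (D : Matrix ι κ ℝ) (S : Matrix κ ι ℝ) (R : Matrix κ κ ℝ) (P : Matrix ι ι ℝ) :
    Matrix ι ι ℝ :=
  A - B * (controlWeight D R P)⁻¹ * crossWeight C D S P

/-- The state weight `CᵀPC + Q - LᵀK⁻¹L` after the shift of the control that removes the cross
term, where `K` is the `controlWeight` and `L` the `crossWeight`. -/
noncomputable def shiftedCost (C : Matrix ι ι ℝ) (D : Matrix ι κ ℝ) (Q : Matrix ι ι ℝ)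
    (S : Matrix κ ι ℝ) (R : Matrix κ κ ℝ) (P : Matrix ι ι ℝ) : Matrix ι ι ℝ :=
  Cᵀ * P * C + Q - (crossWeight C D S P)ᵀ * (controlWeight D R P)⁻¹ * crossWeight C D S P

/-- The coefficient `BK⁻¹Bᵀ` of the quadratic term of the Riccati equation, where `K` is the
`controlWeight`. -/
noncomputable def controlGain (B D : Matrix ι κ ℝ) (R : Matrix κ κ ℝ) (P : Matrix ι ι ℝ) :
    Matrix ι ι ℝ :=
  B * (controlWeight D R P)⁻¹ * Bᵀ

theorem posSemidef_controlGain (hR : R.PosDef) (hP : P.PosSemidef) (B D : Matrix ι κ ℝ) :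
    (controlGain B D R P).PosSemidef :=
  (posDef_controlWeight hR hP D).inv.posSemidef.mul_mul_conjTranspose_same B

theorem posSemidef_shiftedCost (hR : R.PosDef) (hP : P.PosSemidef)
    (hQ : (Q - Sᵀ * R⁻¹ * S).PosSemidef) (C : Matrix ι ι ℝ) (D : Matrix ι κ ℝ) :
    (shiftedCost C D Q S R P).PosSemidef := by
  rw [shiftedCost, ← posSemidef_fromBlocks_iff (posDef_controlWeight hR hP D)]
  have hPsymm : Pᵀ = P := hP.isHermitian
  have hblocks : fromBlocks (Cᵀ * P * C + Q) (crossWeight C D S P)ᵀ (crossWeight C D S P)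
      (controlWeight D R P) = (fromCols C D)ᴴ * P * fromCols C D + fromBlocks Q Sᵀ S R := by
    rw [conjTranspose_eq_transpose_of_trivial, transpose_fromCols, fromRows_mul,
      fromRows_mul_fromCols, fromBlocks_add]
    simp [crossWeight, controlWeight, hPsymm, Matrix.mul_assoc, add_comm]
  rw [hblocks]
  exact (hP.conjTranspose_mul_mul_same _).add ((posSemidef_fromBlocks_iff hR Q S).2 hQ)

theorem completing_square (hX : X.IsSymm) (hR : R.IsSymm) (hP : P.IsSymm) :
    X * A + Aᵀ * X + Cᵀ * P * C + Q -
        (Bᵀ * X + Dᵀ * P * C + S)ᵀ * (R + Dᵀ * P * D)⁻¹ * (Bᵀ * X + Dᵀ * P * C + S) =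
      X * shiftedDrift A B C D S R P + (shiftedDrift A B C D S R P)ᵀ * X +
        shiftedCost C D Q S R P - X * controlGain B D R P * X := by
  have hK : ((controlWeight D R P)⁻¹)ᵀ = (controlWeight D R P)⁻¹ := by
    rw [transpose_nonsing_inv]
    simp [controlWeight, hR.eq, hP.eq, Matrix.mul_assoc]
  rw [add_assoc _ _ S, ← crossWeight.eq_def C D S P, ← controlWeight.eq_def D R P, shiftedDrift,
    shiftedCost, controlGain]
  simp only [transpose_add, transpose_sub, transpose_mul, hX.eq, hK, transpose_transpose,
    Matrix.mul_add, Matrix.add_mul, Matrix.mul_sub, Matrix.sub_mul, Matrix.mul_assoc]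
  abel

theorem continuousOn_controlWeight_inv {P : ℝ → Matrix ι ι ℝ} {s : Set ℝ} (hP : ContinuousOn P s)
    (hPp : ∀ t ∈ s, (P t).PosSemidef) (hR : R.PosDef) (D : Matrix ι κ ℝ) :
    ContinuousOn (fun t ↦ (controlWeight D R (P t))⁻¹) s := by
  have hK : ContinuousOn (fun t ↦ controlWeight D R (P t)) s := by
    unfold controlWeight
    fun_prop
  intro t ht
  have hdet := (posDef_controlWeight hR (hPp t ht) D).det_pos.ne'
  refine (continuousAt_matrix_inv _ ?_).comp_continuousWithinAt (hK t ht)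
  rw [Ring.inverse_eq_inv']
  exact continuousAt_inv₀ hdet

end CompletingTheSquare

section ControlRiccati

open scoped Matrix.Norms.Operator

variable {ι κ : Type*} [Fintype ι] [Fintype κ] [DecidableEq κ] {R : Matrix κ κ ℝ}
  {P : ℝ → Matrix ι ι ℝ} {s : Set ℝ}

theorem continuousOn_shiftedDrift (hR : R.PosDef) (hP : ContinuousOn P s)
    (hPpos : ∀ t ∈ s, (P t).PosSemidef) (A C : Matrix ι ι ℝ) (B D : Matrix ι κ ℝ)
    (S : Matrix κ ι ℝ) : ContinuousOn (fun t ↦ shiftedDrift A B C D S R (P t)) s := by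
  have := continuousOn_controlWeight_inv hP hPpos hR D
  unfold shiftedDrift crossWeight
  fun_prop

theorem continuousOn_shiftedCost (hR : R.PosDef) (hP : ContinuousOn P s)
    (hPpos : ∀ t ∈ s, (P t).PosSemidef) (C Q : Matrix ι ι ℝ) (D : Matrix ι κ ℝ)
    (S : Matrix κ ι ℝ) : ContinuousOn (fun t ↦ shiftedCost C D Q S R (P t)) s := by
  have := continuousOn_controlWeight_inv hP hPpos hR D
  unfold shiftedCost crossWeight
  fun_prop

theorem continuousOn_controlGain (hR : R.PosDef) (hP : ContinuousOn P s)
    (hPpos : ∀ t ∈ s, (P t).PosSemidef) (B D : Matrix ι κ ℝ) :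
    ContinuousOn (fun t ↦ controlGain B D R (P t)) s := by
  have := continuousOn_controlWeight_inv hP hPpos hR D
  unfold controlGain
  fun_prop

variable [DecidableEq ι]

/-- The vector field of the Riccati equation
`X' + XA + AᵀX + CᵀPC + Q - (BᵀX + DᵀPC + S)ᵀ(R + DᵀPD)⁻¹(BᵀX + DᵀPC + S) = 0`
with given `P`, in the standard form reached by completing the square. -/
noncomputable def controlRiccatiField (A : Matrix ι ι ℝ) (B : Matrix ι κ ℝ) (C : Matrix ι ι ℝ)
    (D : Matrix ι κ ℝ) (Q : Matrix ι ι ℝ) (S : Matrix κ ι ℝ) (R : Matrix κ κ ℝ)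
    (P : ℝ → Matrix ι ι ℝ) : ℝ → Matrix ι ι ℝ → Matrix ι ι ℝ :=
  riccatiField (fun t ↦ shiftedDrift A B C D S R (P t)) (fun t ↦ (shiftedDrift A B C D S R (P t))ᵀ)
    (fun t ↦ shiftedCost C D Q S R (P t)) (fun t ↦ controlGain B D R (P t))

theorem continuousOn_controlRiccatiField (hR : R.PosDef) (hP : ContinuousOn P s)
    (hPpos : ∀ t ∈ s, (P t).PosSemidef) {X : ℝ → Matrix ι ι ℝ} (hX : ContinuousOn X s)
    (A C Q : Matrix ι ι ℝ) (B D : Matrix ι κ ℝ) (S : Matrix κ ι ℝ) :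
    ContinuousOn (fun t ↦ controlRiccatiField A B C D Q S R P t (X t)) s := by
  have := continuousOn_shiftedDrift hR hP hPpos A C B D S
  have := continuousOn_shiftedCost hR hP hPpos C Q D S
  have := continuousOn_controlGain hR hP hPpos B D
  unfold controlRiccatiField riccatiField
  fun_prop

theorem add_eq_zero_iff_eq_controlRiccatiField {A C Q : Matrix ι ι ℝ} {B D : Matrix ι κ ℝ}
    {S : Matrix κ ι ℝ} {t : ℝ} {X X' : Matrix ι ι ℝ} (hX : X.IsSymm) (hR : R.IsSymm)
    (hP : (P t).IsSymm) :
    X' + X * A + Aᵀ * X + Cᵀ * P t * C + Q -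
        (Bᵀ * X + Dᵀ * P t * C + S)ᵀ * (R + Dᵀ * P t * D)⁻¹ * (Bᵀ * X + Dᵀ * P t * C + S) = 0 ↔
      X' = controlRiccatiField A B C D Q S R P t X := by
  have hsquare := completing_square (A := A) (B := B) (C := C) (D := D) (Q := Q) (S := S) hX hR hP
  rw [← sub_eq_zero (a := X'), controlRiccatiField, riccatiField]
  refine Eq.congr_left ?_
  linear_combination (norm := abel) hsquare

end ControlRiccati

section MeanFieldRiccati

open Set
open scoped Matrix.Norms.Operator

variable {n m : ℕ} {A Abar C Cbar : Matrix (Fin n) (Fin n) ℝ} {B D : Matrix (Fin n) (Fin m) ℝ}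
  {Q Qbar : Matrix (Fin n) (Fin n) ℝ} {S : Matrix (Fin m) (Fin n) ℝ} {R : Matrix (Fin m) (Fin m) ℝ}
  {T : ℝ} {P : ℝ → Matrix (Fin n) (Fin n) ℝ}

theorem isRiccatiPiSol_iff (hR : R.PosDef) (hT : 0 < T) (hP : ContinuousOn P (Icc 0 T))
    (hPpos : ∀ t ∈ Icc 0 T, (P t).PosSemidef) (X : ℝ → Matrix (Fin n) (Fin n) ℝ) :
    IsRiccatiPiSol A Abar C Cbar B D Q Qbar S R T P X ↔ X T = 0 ∧
      IsIntegralCurveOn X (controlRiccatiField (A + Abar) B (C + Cbar) D (Q + Qbar) S R P)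
        (Icc 0 T) ∧ ∀ t ∈ Icc 0 T, (X t).PosSemidef := by
  have equation_iff {t : ℝ} (ht : t ∈ Icc 0 T) (hX : (X t).IsSymm) :=
    add_eq_zero_iff_eq_controlRiccatiField (A := A + Abar) (B := B) (C := C + Cbar) (D := D)
      (Q := Q + Qbar) (S := S) (R := R)
      (X' := matDerivWithin X (Icc 0 T) t) hX hR.isHermitian
      (hPpos t ht).isHermitian
  simp only [← add_assoc] at equation_iff
  constructor
  · rintro ⟨hdiff, hsymm, hpos, heq, hXT⟩
    refine ⟨hXT, fun t ht ↦ ?_, hpos⟩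
    rw [← (equation_iff ht (hsymm t ht)).1 (heq t ht)]
    exact hasDerivWithinAt_matDerivWithin fun i j ↦ (hdiff i j).differentiableOn one_ne_zero t ht
  · rintro ⟨hXT, hX, hpos⟩
    have hsymm : ∀ t ∈ Icc 0 T, (X t).IsSymm := fun t ht ↦ (hpos t ht).isHermitian
    refine ⟨contDiffOn_one_entry (uniqueDiffOn_Icc hT) hX ?_, hsymm, hpos, fun t ht ↦ ?_, hXT⟩
    · exact continuousOn_controlRiccatiField hR hP hPpos hX.continuousOn _ _ _ _ _ _
    · exact (equation_iff ht (hsymm t ht)).2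
        (matDerivWithin_eq (hX t ht) (uniqueDiffOn_Icc hT t ht))

theorem riccati_Pi_solvability_general (hR : R.PosDef)
    (hQ : (Q + Qbar - Sᵀ * R⁻¹ * S).PosSemidef) (hT : 0 < T) (hP : ContinuousOn P (Icc 0 T))
    (hPpos : ∀ t ∈ Icc 0 T, (P t).PosSemidef) :
    (∃ X, IsRiccatiPiSol A Abar C Cbar B D Q Qbar S R T P X) ∧
      ∀ X Y, IsRiccatiPiSol A Abar C Cbar B D Q Qbar S R T P X →
        IsRiccatiPiSol A Abar C Cbar B D Q Qbar S R T P Y → ∀ t ∈ Icc 0 T, X t = Y t := by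
  have hF := continuousOn_shiftedDrift hR hP hPpos (A + Abar) (C + Cbar) B D S
  have hN := continuousOn_controlGain hR hP hPpos B D
  simp only [isRiccatiPiSol_iff hR hT hP hPpos]
  constructor
  · exact exists_posSemidef_isIntegralCurveOn_riccatiField hT.le hF
      (continuousOn_shiftedCost hR hP hPpos (C + Cbar) (Q + Qbar) D S) hN
      (fun t ht ↦ posSemidef_shiftedCost hR (hPpos t ht) hQ (C + Cbar) D)
      (fun t ht ↦ posSemidef_controlGain hR (hPpos t ht) B D)
  · rintro X Y ⟨hXT, hX, -⟩ ⟨hYT, hY, -⟩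
    exact eqOn_of_isIntegralCurveOn_riccatiField hF
      (continuous_id.matrix_transpose.comp_continuousOn hF) hN hX hY (right_mem_Icc.2 hT.le)
      (hXT.trans hYT.symm)

end MeanFieldRiccati

/-- if `R > 0`, `Q - SᵀR⁻¹S > 0` and `Q + Q̄ - SᵀR⁻¹S > 0`, and if `P` is
a C¹ symmetric positive semi-definite solution of the `P`-Riccati equation on `[0, T]`,
then the mean field Riccati terminal value problem for `Π` admits a unique C¹ symmetric
positive semi-definite solution on `[0, T]`. -/
theorem riccati_Pi_solvability {n m : ℕ} (hn : 0 < n) (hm : 0 < m)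
    (A Abar C Cbar : Matrix (Fin n) (Fin n) ℝ) (B D : Matrix (Fin n) (Fin m) ℝ)
    (Q Qbar : Matrix (Fin n) (Fin n) ℝ) (S : Matrix (Fin m) (Fin n) ℝ)
    (R : Matrix (Fin m) (Fin m) ℝ)
    (hQ : Q.IsSymm) (hQbar : Qbar.IsSymm) (hRpd : R.PosDef)
    (hQS : (Q - Sᵀ * R⁻¹ * S).PosDef) (hQQbS : (Q + Qbar - Sᵀ * R⁻¹ * S).PosDef)
    (T : ℝ) (hT : 0 < T)
    (P : ℝ → Matrix (Fin n) (Fin n) ℝ) (hP : IsRiccatiPSol A C B D Q S R T P) :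
    (∃ Pi0 : ℝ → Matrix (Fin n) (Fin n) ℝ,
        IsRiccatiPiSol A Abar C Cbar B D Q Qbar S R T P Pi0)
    ∧ ∀ Pi₁ Pi₂ : ℝ → Matrix (Fin n) (Fin n) ℝ,
        IsRiccatiPiSol A Abar C Cbar B D Q Qbar S R T P Pi₁ →
        IsRiccatiPiSol A Abar C Cbar B D Q Qbar S R T P Pi₂ →
        ∀ t ∈ Set.Icc (0:ℝ) T, Pi₁ t = Pi₂ t := by
  obtain ⟨hPdiff, -, hPpos, -⟩ := hP
  have hPcont : ContinuousOn P (Set.Icc 0 T) :=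
    continuousOn_pi.2 fun i ↦ continuousOn_pi.2 fun j ↦ (hPdiff i j).continuousOn
  exact riccati_Pi_solvability_general hRpd hQQbS.posSemidef hT hPcont hPpos
end
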